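/- arXiv:2309.16610 — 10 statements merged into one kernel-verified Lean document; each statement's English description precedes it below -/
import Mathlib

section
/- Let (i,j,k) be an even permutation of (1,2,3) and let ψ ∈ E_i. Then for all X ∈ V one has −2φ_i(X)·(Φ_j·ψ) + ξ_i·(X·(Φ_j·ψ)) − X·(ξ_i·(Φ_j·ψ)) = 8φ_k(X)·ψ − 2ξ_k·(X·ψ) + 2X·(ξ_k·ψ) − 4η_i(X)ξ_j·ψ + 4η_j(X)ξ_i·ψ, and −2φ_i(X)·(Φ_k·ψ) + ξ_i·(X·(Φ_k·ψ)) − X·(ξ_i·(Φ_k·ψ)) = −8φ_j(X)·ψ + 2ξ_j·(X·ψ) − 2X·(ξ_j·ψ) − 4η_i(X)ξ_k·ψ + 4η_k(X)ξ_i·ψ. -/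
noncomputable section

/- Context: an almost 3-contact metric structure on a real inner product space `V`
of dimension `4n-1` (encoded by an orthonormal basis indexed by `Fin (4*n-1)`),
a Clifford module `W` over `Cl(V, -⟨·,·⟩)` encoded by a linear map
`cl : V →ₗ[ℝ] Module.End ℝ W` satisfying the Clifford relation, the action of
2-forms on spinors, and the subbundles `E_i`.  Even permutations `(i,j,k)` of
`(1,2,3)` are encoded as `(i, i+1, i+2)` with `i : Fin 3` (cyclic addition). -/

open scoped InnerProductSpace

/-- An almost 3-contact metric structure on a real inner product space. -/
structure AlmostThreeContact (V : Type*) [NormedAddCommGroup V] [InnerProductSpace ℝ V] where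
  xi : Fin 3 → V
  phi : Fin 3 → V →ₗ[ℝ] V
  xi_orthonormal : ∀ i j : Fin 3, ⟪xi i, xi j⟫_ℝ = if i = j then 1 else 0
  phi_skew : ∀ (i : Fin 3) (X Y : V), ⟪phi i X, Y⟫_ℝ = -⟪X, phi i Y⟫_ℝ
  phi_phi : ∀ (i : Fin 3) (X : V), phi i (phi i X) = -X + ⟪xi i, X⟫_ℝ • xi i
  phi_xi_self : ∀ i : Fin 3, phi i (xi i) = 0
  phi_xi : ∀ i : Fin 3, phi i (xi (i + 1)) = xi (i + 2)
  phi_xi' : ∀ i : Fin 3, phi (i + 1) (xi i) = -xi (i + 2)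
  eta_phi : ∀ (i : Fin 3) (X : V), ⟪xi i, X⟫_ℝ = ⟪xi (i + 1), phi (i + 2) X⟫_ℝ
  eta_phi' : ∀ (i : Fin 3) (X : V), ⟪xi i, X⟫_ℝ = -⟪xi (i + 2), phi (i + 1) X⟫_ℝ
  phi_comp : ∀ (i : Fin 3) (X : V),
    phi i X = phi (i + 1) (phi (i + 2) X) - ⟪xi (i + 2), X⟫_ℝ • xi (i + 1)
  phi_comp' : ∀ (i : Fin 3) (X : V),
    phi i X = -phi (i + 2) (phi (i + 1) X) + ⟪xi (i + 1), X⟫_ℝ • xi (i + 2)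
  compat : ∀ (i : Fin 3) (X Y : V),
    ⟪phi i X, phi i Y⟫_ℝ = ⟪X, Y⟫_ℝ - ⟪xi i, X⟫_ℝ * ⟪xi i, Y⟫_ℝ

variable {V : Type*} [NormedAddCommGroup V] [InnerProductSpace ℝ V]
variable {W : Type*} [AddCommGroup W] [Module ℝ W]

/-- `W` is a module over the Clifford algebra of `(V, q)` with `q v = -⟨v,v⟩`:
the action satisfies `v·w·ψ + w·v·ψ = -2⟨v,w⟩ψ`. -/
def IsCliffordAction (cl : V →ₗ[ℝ] Module.End ℝ W) : Prop :=
  ∀ v w : V, cl v * cl w + cl w * cl v = (-(2 * ⟪v, w⟫_ℝ)) • (1 : Module.End ℝ W)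

/-- The subspace `E_i = {ψ : (-2φ_i(X) + ξ_i X - X ξ_i)·ψ = 0 for all X}`. -/
def Eset (D : AlmostThreeContact V) (cl : V →ₗ[ℝ] Module.End ℝ W) (i : Fin 3) : Set W :=
  {ψ | ∀ X : V,
    (-2 : ℝ) • cl (D.phi i X) ψ + cl (D.xi i) (cl X ψ) - cl X (cl (D.xi i) ψ) = 0}

/-- Action of a 2-form `τ` on a spinor: `τ·ψ = Σ_{p<q} τ(e_p,e_q) e_p·e_q·ψ`. -/
def formAct {m : ℕ} (b : OrthonormalBasis (Fin m) ℝ V)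
    (cl : V →ₗ[ℝ] Module.End ℝ W) (τ : V → V → ℝ) (ψ : W) : W :=
  ∑ p : Fin m, ∑ q : Fin m, if p < q then τ (b p) (b q) • cl (b p) (cl (b q) ψ) else 0

/-- The fundamental 2-form `Φ_i(X,Y) = ⟨X, φ_i(Y)⟩`. -/
def Phi (D : AlmostThreeContact V) (i : Fin 3) : V → V → ℝ := fun X Y => ⟪X, D.phi i Y⟫_ℝ

/-- Half the full symmetric double sum. -/
theorem aux_half {m : ℕ} (T : Fin m → Fin m → W) (hs : ∀ p q, T p q = T q p)
    (h0 : ∀ p, T p p = 0) :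
    (2 : ℝ) • (∑ p : Fin m, ∑ q : Fin m, if p < q then T p q else 0)
      = ∑ q : Fin m, ∑ p : Fin m, T p q := by
  have h1 : ∑ q : Fin m, ∑ p : Fin m, T p q
      = ∑ p : Fin m, ∑ q : Fin m, ((if p < q then T p q else 0)
        + (if q < p then T q p else 0)) := by
    rw [Finset.sum_comm]
    refine Finset.sum_congr rfl fun p _ => Finset.sum_congr rfl fun q _ => ?_
    rcases lt_trichotomy p q with h | h | h
    · simp [h, h.not_gt]
    · subst h; simp [h0]
    · simp [h, h.not_gt, hs p q]
  rw [h1]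
  simp only [Finset.sum_add_distrib]
  rw [two_smul]
  congr 1
  rw [Finset.sum_comm]

theorem aux_cl {cl : V →ₗ[ℝ] Module.End ℝ W} (hcl : IsCliffordAction cl) (v w : V) (ψ : W) :
    cl v (cl w ψ) = -(cl w (cl v ψ)) + (-(2 * ⟪v, w⟫_ℝ)) • ψ := by
  have h := LinearMap.congr_fun (hcl v w) ψ
  simp only [LinearMap.add_apply, Module.End.mul_apply, LinearMap.smul_apply,
    Module.End.one_apply] at h
  rw [← h]; abel

theorem aux_form {m : ℕ} (D : AlmostThreeContact V) (b : OrthonormalBasis (Fin m) ℝ V)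
    (cl : V →ₗ[ℝ] Module.End ℝ W) (hcl : IsCliffordAction cl) (j : Fin 3) (ψ : W) :
    (2 : ℝ) • formAct b cl (Phi D j) ψ = ∑ q, cl (D.phi j (b q)) (cl (b q) ψ) := by
  have hskew : ∀ X Y : V, ⟪X, D.phi j Y⟫_ℝ = -⟪Y, D.phi j X⟫_ℝ := by
    intro X Y
    rw [real_inner_comm, D.phi_skew]
  unfold formAct
  rw [aux_half (fun p q => Phi D j (b p) (b q) • cl (b p) (cl (b q) ψ))]
  · refine Finset.sum_congr rfl fun q _ => ?_
    conv_rhs => rw [← b.sum_repr' (D.phi j (b q))]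
    simp [Phi]
  · intro p q
    by_cases h : p = q
    · rw [h]
    · have := aux_cl hcl (b p) (b q) ψ
      rw [b.inner_eq_zero h] at this
      simp only [Phi]
      rw [this, hskew]
      simp
  · intro p
    have := hskew (b p) (b p)
    have h : ⟪b p, D.phi j (b p)⟫_ℝ = 0 := by linarith
    simp [Phi, h]

theorem aux_comm {m : ℕ} (D : AlmostThreeContact V) (b : OrthonormalBasis (Fin m) ℝ V)
    (cl : V →ₗ[ℝ] Module.End ℝ W) (hcl : IsCliffordAction cl) (j : Fin 3) (X : V) (ψ : W) :
    cl X (formAct b cl (Phi D j) ψ)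
      = formAct b cl (Phi D j) (cl X ψ) + (2 : ℝ) • cl (D.phi j X) ψ := by
  have h2 : (2 : ℝ) • cl X (formAct b cl (Phi D j) ψ)
      = (2 : ℝ) • (formAct b cl (Phi D j) (cl X ψ) + (2 : ℝ) • cl (D.phi j X) ψ) := by
    rw [← map_smul, smul_add, aux_form D b cl hcl, aux_form D b cl hcl, map_sum]
    have e1 : ∑ q, (2 * ⟪b q, X⟫_ℝ) • cl (D.phi j (b q)) ψ = (2 : ℝ) • cl (D.phi j X) ψ := by
      conv_rhs => rw [← b.sum_repr' X]
      simp [Finset.smul_sum, mul_smul]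
    have e2 : ∑ q, (2 * ⟪b q, D.phi j X⟫_ℝ) • cl (b q) ψ = (2 : ℝ) • cl (D.phi j X) ψ := by
      conv_rhs => rw [← b.sum_repr' (D.phi j X)]
      simp [Finset.smul_sum, mul_smul]
    have e3 : (2 : ℝ) • (2 : ℝ) • cl (D.phi j X) ψ = (2 : ℝ) • cl (D.phi j X) ψ
        + (2 : ℝ) • cl (D.phi j X) ψ := two_smul _ _
    rw [e3]
    nth_rewrite 1 [← e1]
    rw [← e2, ← Finset.sum_add_distrib, ← Finset.sum_add_distrib]
    refine Finset.sum_congr rfl fun q _ => ?_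
    rw [aux_cl hcl X (D.phi j (b q)), aux_cl hcl X (b q) ψ]
    have e4 : ⟪X, D.phi j (b q)⟫_ℝ = -⟪b q, D.phi j X⟫_ℝ := by
      rw [real_inner_comm, D.phi_skew]
    rw [e4, real_inner_comm X (b q)]
    simp only [map_add, map_neg, map_smul]
    module
  have := congrArg (fun w => (2⁻¹ : ℝ) • w) h2
  simpa [smul_smul] using this

theorem aux_lin {m : ℕ} (b : OrthonormalBasis (Fin m) ℝ V)
    (cl : V →ₗ[ℝ] Module.End ℝ W) (τ : V → V → ℝ) :
    ∃ F : W →ₗ[ℝ] W, ∀ ψ, formAct b cl τ ψ = F ψ := by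
  refine ⟨∑ p : Fin m, ∑ q : Fin m, if p < q then τ (b p) (b q) • (cl (b p) * cl (b q)) else 0, ?_⟩
  intro ψ
  simp only [formAct, LinearMap.sum_apply]
  refine Finset.sum_congr rfl fun p _ => Finset.sum_congr rfl fun q _ => ?_
  split_ifs <;> simp

theorem aux_main {m : ℕ} (D : AlmostThreeContact V) (b : OrthonormalBasis (Fin m) ℝ V)
    (cl : V →ₗ[ℝ] Module.End ℝ W) (hcl : IsCliffordAction cl)
    (i j : Fin 3) (ψ : W) (hψ : ψ ∈ Eset D cl i) (X : V) :
    (-2 : ℝ) • cl (D.phi i X) (formAct b cl (Phi D j) ψ)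
        + cl (D.xi i) (cl X (formAct b cl (Phi D j) ψ))
        - cl X (cl (D.xi i) (formAct b cl (Phi D j) ψ))
      = (-4 : ℝ) • cl (D.phi j (D.phi i X)) ψ + (4 : ℝ) • cl (D.phi i (D.phi j X)) ψ
        + (2 : ℝ) • cl (D.phi j (D.xi i)) (cl X ψ)
        - (2 : ℝ) • cl X (cl (D.phi j (D.xi i)) ψ) := by
  obtain ⟨F, hF⟩ := aux_lin b cl (Phi D j)
  have hc := aux_comm D b cl hcl j
  simp only [hF] at hc ⊢
  have h1 := hψ X
  have h2 := congrArg (fun w => (2 : ℝ) • w) (hψ (D.phi j X))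
  have h3 := congrArg F h1
  simp only [map_add, map_sub, map_smul, map_zero] at h3
  simp only [hc, map_add, map_smul]
  linear_combination (norm := module) h2 + h3

/-- For `(i,j,k)` an even permutation of `(1,2,3)`, `ψ ∈ E_i`
and all `X ∈ V`:
`(-2φ_i(X) + ξ_i X - X ξ_i)·Φ_j·ψ
   = (8φ_k(X) - 2ξ_k X + 2X ξ_k - 4η_i(X)ξ_j + 4η_j(X)ξ_i)·ψ` and
`(-2φ_i(X) + ξ_i X - X ξ_i)·Φ_k·ψ
   = (-8φ_j(X) + 2ξ_j X - 2X ξ_j - 4η_i(X)ξ_k + 4η_k(X)ξ_i)·ψ`. -/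
theorem statement_0 {n : ℕ} (hn : 1 ≤ n)
    (D : AlmostThreeContact V) (b : OrthonormalBasis (Fin (4 * n - 1)) ℝ V)
    (cl : V →ₗ[ℝ] Module.End ℝ W) (hcl : IsCliffordAction cl)
    (i : Fin 3) (ψ : W) (hψ : ψ ∈ Eset D cl i) (X : V) :
    ((-2 : ℝ) • cl (D.phi i X) (formAct b cl (Phi D (i + 1)) ψ)
        + cl (D.xi i) (cl X (formAct b cl (Phi D (i + 1)) ψ))
        - cl X (cl (D.xi i) (formAct b cl (Phi D (i + 1)) ψ))
      = (8 : ℝ) • cl (D.phi (i + 2) X) ψ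
        - (2 : ℝ) • cl (D.xi (i + 2)) (cl X ψ)
        + (2 : ℝ) • cl X (cl (D.xi (i + 2)) ψ)
        - (4 * ⟪D.xi i, X⟫_ℝ) • cl (D.xi (i + 1)) ψ
        + (4 * ⟪D.xi (i + 1), X⟫_ℝ) • cl (D.xi i) ψ)
    ∧ ((-2 : ℝ) • cl (D.phi i X) (formAct b cl (Phi D (i + 2)) ψ)
        + cl (D.xi i) (cl X (formAct b cl (Phi D (i + 2)) ψ))
        - cl X (cl (D.xi i) (formAct b cl (Phi D (i + 2)) ψ))
      = (-8 : ℝ) • cl (D.phi (i + 1) X) ψ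
        + (2 : ℝ) • cl (D.xi (i + 1)) (cl X ψ)
        - (2 : ℝ) • cl X (cl (D.xi (i + 1)) ψ)
        - (4 * ⟪D.xi i, X⟫_ℝ) • cl (D.xi (i + 2)) ψ
        + (4 * ⟪D.xi (i + 2), X⟫_ℝ) • cl (D.xi i) ψ) := by
  constructor
  · rw [aux_main D b cl hcl i (i + 1) ψ hψ X, D.phi_xi']
    have a1 := D.phi_comp (i + 2) X
    have a2 := D.phi_comp' (i + 2) X
    have s1 : i + 2 + 1 = i := (by decide : ∀ i : Fin 3, i + 2 + 1 = i) i
    have s2 : i + 2 + 2 = i + 1 := (by decide : ∀ i : Fin 3, i + 2 + 2 = i + 1) i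
    rw [s1, s2] at a1 a2
    have b1 : D.phi i (D.phi (i + 1) X) = D.phi (i + 2) X + ⟪D.xi (i + 1), X⟫_ℝ • D.xi i := by
      rw [a1]; abel
    have b2 : D.phi (i + 1) (D.phi i X) = -D.phi (i + 2) X + ⟪D.xi i, X⟫_ℝ • D.xi (i + 1) := by
      rw [a2]; abel
    rw [b1, b2]
    simp only [map_add, map_neg, map_smul, LinearMap.add_apply, LinearMap.neg_apply,
      LinearMap.smul_apply]
    module
  · have s1 : i + 1 + 1 = i + 2 := (by decide : ∀ i : Fin 3, i + 1 + 1 = i + 2) i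
    have s2 : i + 1 + 2 = i := (by decide : ∀ i : Fin 3, i + 1 + 2 = i) i
    have s3 : i + 2 + 1 = i := (by decide : ∀ i : Fin 3, i + 2 + 1 = i) i
    have s4 : i + 2 + 2 = i + 1 := (by decide : ∀ i : Fin 3, i + 2 + 2 = i + 1) i
    have a0 := D.phi_xi (i + 2)
    rw [s3, s4] at a0
    rw [aux_main D b cl hcl i (i + 2) ψ hψ X, a0]
    have a1 := D.phi_comp (i + 1) X
    have a2 := D.phi_comp' (i + 1) X
    rw [s1, s2] at a1 a2
    have b1 : D.phi i (D.phi (i + 2) X) = -D.phi (i + 1) X + ⟪D.xi (i + 2), X⟫_ℝ • D.xi i := by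
      rw [a2]; abel
    have b2 : D.phi (i + 2) (D.phi i X) = D.phi (i + 1) X + ⟪D.xi i, X⟫_ℝ • D.xi (i + 2) := by
      rw [a1]; abel
    rw [b1, b2]
    simp only [map_add, map_neg, map_smul, LinearMap.add_apply, LinearMap.neg_apply,
      LinearMap.smul_apply]
    module
end
end

section
/- Let i ∈ {1,2,3}, let ψ ∈ E_i, and let X ∈ V be a unit vector orthogonal to ξ_i. Then X·(φ_i(X)·ψ) = ξ_i·ψ. -/
noncomputable section

/- Context: an almost 3-contact metric structure on a real inner product space `V`
of dimension `4n-1` (encoded by an orthonormal basis indexed by `Fin (4*n-1)`),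
a Clifford module `W` over `Cl(V, -⟨·,·⟩)` encoded by a linear map
`cl : V →ₗ[ℝ] Module.End ℝ W` satisfying the Clifford relation, the action of
2-forms on spinors, and the subbundles `E_i`.  Even permutations `(i,j,k)` of
`(1,2,3)` are encoded as `(i, i+1, i+2)` with `i : Fin 3` (cyclic addition). -/

open scoped InnerProductSpace

variable {V : Type*} [NormedAddCommGroup V] [InnerProductSpace ℝ V]
variable {W : Type*} [AddCommGroup W] [Module ℝ W]

/-- For `i ∈ {1,2,3}`, `ψ ∈ E_i` and `X` a unit vector
orthogonal to `ξ_i`: `X·(φ_i(X)·ψ) = ξ_i·ψ`. -/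
theorem statement_2
    (D : AlmostThreeContact V)
    (cl : V →ₗ[ℝ] Module.End ℝ W) (hcl : IsCliffordAction cl)
    (i : Fin 3) (ψ : W) (hψ : ψ ∈ Eset D cl i)
    (X : V) (hX : ‖X‖ = 1) (hXxi : ⟪D.xi i, X⟫_ℝ = 0) :
    cl X (cl (D.phi i X) ψ) = cl (D.xi i) ψ := by
  have h1 : cl (D.xi i) (cl X ψ) + cl X (cl (D.xi i) ψ) = 0 := by
    have h := congrArg (fun f : Module.End ℝ W => f ψ) (hcl (D.xi i) X)
    simpa [hXxi] using h
  have h2 : cl X (cl X (cl (D.xi i) ψ)) = -cl (D.xi i) ψ := by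
    have h := congrArg (fun f : Module.End ℝ W => f (cl (D.xi i) ψ)) (hcl X X)
    simp only [real_inner_self_eq_norm_sq, hX, LinearMap.add_apply, Module.End.mul_apply,
      LinearMap.smul_apply, Module.End.one_apply] at h
    linear_combination (norm := module) (1 / 2 : ℝ) • h
  have h3 : cl (D.phi i X) ψ = -cl X (cl (D.xi i) ψ) := by
    have h := hψ X
    linear_combination (norm := module) (-1 / 2 : ℝ) • h + (1 / 2 : ℝ) • h1
  rw [h3, map_neg, h2, neg_neg]
end
end

section
/- Let (p,q,r) be an even permutation of (1,2,3) and let f_1,…,f_{4n−4} be an orthonormal basis of the horizontal subspace H := ker η_1 ∩ ker η_2 ∩ ker η_3. Then for every ψ ∈ W: Φ_p·(Φ_q·ψ) − Φ_q·(Φ_p·ψ) = −2Φ_r·ψ + Σ_{s=1}^{4n−4} φ_p(f_s)·(φ_q(f_s)·ψ). -/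
noncomputable section

/- Context: an almost 3-contact metric structure on a real inner product space `V`
of dimension `4n-1` (encoded by an orthonormal basis indexed by `Fin (4*n-1)`),
a Clifford module `W` over `Cl(V, -⟨·,·⟩)` encoded by a linear map
`cl : V →ₗ[ℝ] Module.End ℝ W` satisfying the Clifford relation, the action of
2-forms on spinors, and the subbundles `E_i`.  Even permutations `(i,j,k)` of
`(1,2,3)` are encoded as `(i, i+1, i+2)` with `i : Fin 3` (cyclic addition). -/

open scoped InnerProductSpace

variable {V : Type*} [NormedAddCommGroup V] [InnerProductSpace ℝ V]
variable {W : Type*} [AddCommGroup W] [Module ℝ W]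

/-- `∑ₑ φ(e)·e` as an operator. -/
def auxM {m : ℕ} (b : OrthonormalBasis (Fin m) ℝ V)
    (cl : V →ₗ[ℝ] Module.End ℝ W) (φ : V →ₗ[ℝ] V) : Module.End ℝ W :=
  ∑ i, cl (φ (b i)) * cl (b i)

theorem aux_expand {m : ℕ} (b : OrthonormalBasis (Fin m) ℝ V) (v : V) :
    ∑ i, ⟪b i, v⟫_ℝ • b i = v := b.sum_repr' v

theorem aux_formAct {m : ℕ} (b : OrthonormalBasis (Fin m) ℝ V)
    (cl : V →ₗ[ℝ] Module.End ℝ W) (hcl : IsCliffordAction cl) (φ : V →ₗ[ℝ] V)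
    (hφ : ∀ X Y : V, ⟪φ X, Y⟫_ℝ = -⟪X, φ Y⟫_ℝ) (ψ : W) :
    (2 : ℝ) • formAct b cl (fun X Y => ⟪X, φ Y⟫_ℝ) ψ = auxM b cl φ ψ := by
  set g : Fin m → Fin m → W := fun p q => ⟪b p, φ (b q)⟫_ℝ • cl (b p) (cl (b q) ψ) with hg
  have hM : auxM b cl φ ψ = ∑ p, ∑ q, g p q := by
    rw [Finset.sum_comm]
    simp only [auxM, LinearMap.sum_apply, Module.End.mul_apply]
    refine Finset.sum_congr rfl fun q _ => ?_
    conv_lhs => rw [← aux_expand b (φ (b q))]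
    simp [hg, LinearMap.sum_apply]
  have hdiag : ∀ p, g p p = 0 := by
    intro p
    have h := hφ (b p) (b p)
    rw [real_inner_comm] at h
    have h0 : ⟪b p, φ (b p)⟫_ℝ = 0 := by linarith
    simp [hg, h0]
  have hsymm : ∀ p q, p ≠ q → g p q = g q p := by
    intro p q hpq
    have h := hφ (b q) (b p)
    rw [real_inner_comm] at h
    have h2 := congrArg (fun T : Module.End ℝ W => T ψ) (hcl (b p) (b q))
    have h3 : ⟪b p, b q⟫_ℝ = 0 := b.orthonormal.2 hpq
    simp only [h3, mul_zero, neg_zero, zero_smul, LinearMap.add_apply, Module.End.mul_apply,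
      LinearMap.zero_apply] at h2
    have h4 : cl (b p) (cl (b q) ψ) = - cl (b q) (cl (b p) ψ) := eq_neg_of_add_eq_zero_left h2
    simp only [hg]
    rw [h, h4]
    simp
  have hsplit : ∀ p q, g p q = (if p < q then g p q else 0) + (if q < p then g q p else 0) := by
    intro p q
    rcases lt_trichotomy p q with h | h | h
    · simp [h, h.not_gt]
    · subst h; simp [hdiag]
    · simp [h, h.not_gt, hsymm p q h.ne']
  have hF : formAct b cl (fun X Y => ⟪X, φ Y⟫_ℝ) ψ
      = ∑ p, ∑ q, if p < q then g p q else 0 := rfl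
  rw [hM, hF, two_smul]
  conv_rhs => 
    enter [2, p, 2, q]
    rw [hsplit p q]
  simp only [Finset.sum_add_distrib]
  congr 1
  rw [Finset.sum_comm]

theorem aux_comm_s3 {m : ℕ} (b : OrthonormalBasis (Fin m) ℝ V)
    (cl : V →ₗ[ℝ] Module.End ℝ W) (hcl : IsCliffordAction cl) (φ : V →ₗ[ℝ] V)
    (hφ : ∀ X Y : V, ⟪φ X, Y⟫_ℝ = -⟪X, φ Y⟫_ℝ) (v : V) :
    auxM b cl φ * cl v - cl v * auxM b cl φ = (-4 : ℝ) • cl (φ v) := by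
  have key : ∀ x y : V, cl x * cl y * cl v - cl v * (cl x * cl y)
      = (-2 * ⟪y, v⟫_ℝ) • cl x + (2 * ⟪x, v⟫_ℝ) • cl y := by
    intro x y
    have h1 := hcl y v
    have h2 := hcl x v
    have : cl x * cl y * cl v - cl v * (cl x * cl y)
      = cl x * (cl y * cl v + cl v * cl y) - (cl x * cl v + cl v * cl x) * cl y := by
      noncomm_ring
    rw [this, h1, h2]
    simp only [mul_smul_comm, smul_mul_assoc, mul_one, one_mul]
    module
  have e1 : ∑ i, ⟪b i, v⟫_ℝ • cl (φ (b i)) = cl (φ v) := by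
    conv_rhs => rw [← aux_expand b v]
    simp
  have e2 : ∑ i, ⟪φ (b i), v⟫_ℝ • cl (b i) = - cl (φ v) := by
    conv_rhs => rw [← aux_expand b (φ v)]
    simp [hφ]
  simp only [auxM, Finset.sum_mul, Finset.mul_sum, ← Finset.sum_sub_distrib, key]
  simp only [Finset.sum_add_distrib, mul_smul, ← Finset.smul_sum, e1, e2]
  module

theorem aux_move {m : ℕ} (b : OrthonormalBasis (Fin m) ℝ V)
    (cl : V →ₗ[ℝ] Module.End ℝ W) (α β : V →ₗ[ℝ] V)
    (hβ : ∀ X Y : V, ⟪β X, Y⟫_ℝ = -⟪X, β Y⟫_ℝ) :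
    ∑ i, cl (α (b i)) * cl (β (b i)) = - auxM b cl (α ∘ₗ β) := by
  have h1 : ∀ i, cl (α (b i)) * cl (β (b i))
      = ∑ j, ⟪b j, β (b i)⟫_ℝ • (cl (α (b i)) * cl (b j)) := by
    intro i
    conv_lhs => rw [← aux_expand b (β (b i))]
    simp [Finset.mul_sum]
  have h2 : ∀ j, cl (α (β (b j))) * cl (b j)
      = ∑ i, ⟪b i, β (b j)⟫_ℝ • (cl (α (b i)) * cl (b j)) := by
    intro j
    conv_lhs => rw [← aux_expand b (β (b j))]
    simp [Finset.sum_mul]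
  simp only [auxM, LinearMap.comp_apply, h1, h2]
  rw [Finset.sum_comm, ← Finset.sum_neg_distrib]
  refine Finset.sum_congr rfl fun j _ => ?_
  rw [← Finset.sum_neg_distrib]
  refine Finset.sum_congr rfl fun i _ => ?_
  have h := hβ (b j) (b i)
  rw [real_inner_comm] at h
  rw [h, neg_smul, neg_neg]

theorem aux_bracket {m : ℕ} (b : OrthonormalBasis (Fin m) ℝ V)
    (cl : V →ₗ[ℝ] Module.End ℝ W) (hcl : IsCliffordAction cl) (α β : V →ₗ[ℝ] V)
    (hα : ∀ X Y : V, ⟪α X, Y⟫_ℝ = -⟪X, α Y⟫_ℝ) :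
    auxM b cl α * auxM b cl β - auxM b cl β * auxM b cl α
      = (-4 : ℝ) • auxM b cl (α ∘ₗ β) + (4 : ℝ) • auxM b cl (β ∘ₗ α) := by
  have h : auxM b cl α * auxM b cl β - auxM b cl β * auxM b cl α
      = ∑ i, ((-4 : ℝ) • (cl (α (β (b i))) * cl (b i))
        + (-4 : ℝ) • (cl (β (b i)) * cl (α (b i)))) := by
    conv_lhs => rw [auxM.eq_def b cl β]
    rw [Finset.mul_sum, Finset.sum_mul, ← Finset.sum_sub_distrib]
    refine Finset.sum_congr rfl fun i _ => ?_
    have k1 := aux_comm_s3 b cl hcl α hα (β (b i))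
    have k2 := aux_comm_s3 b cl hcl α hα (b i)
    rw [← smul_mul_assoc, ← k1, ← mul_smul_comm, ← k2]
    noncomm_ring
  rw [h, Finset.sum_add_distrib, ← Finset.smul_sum, ← Finset.smul_sum, aux_move b cl β α hα]
  simp only [auxM, LinearMap.comp_apply]
  module

theorem aux_rank {m : ℕ} (b : OrthonormalBasis (Fin m) ℝ V)
    (cl : V →ₗ[ℝ] Module.End ℝ W) (x y : V) :
    ∑ i, ⟪y, b i⟫_ℝ • (cl x * cl (b i)) = cl x * cl y := by
  conv_rhs => rw [← aux_expand b y]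
  simp [Finset.mul_sum, real_inner_comm]

theorem aux_trace {m k : ℕ} (b : OrthonormalBasis (Fin m) ℝ V) (D : AlmostThreeContact V)
    (cl : V →ₗ[ℝ] Module.End ℝ W) (α β : V →ₗ[ℝ] V)
    (f : Fin k → V) (hf_on : Orthonormal ℝ f)
    (hf_horiz : ∀ (s : Fin k) (i : Fin 3), ⟪D.xi i, f s⟫_ℝ = 0)
    (hf_span : ∀ v : V, (∀ i : Fin 3, ⟪D.xi i, v⟫_ℝ = 0) →
      v ∈ Submodule.span ℝ (Set.range f)) :
    ∑ i, cl (α (b i)) * cl (β (b i)) = ∑ s, cl (α (f s)) * cl (β (f s))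
      + ∑ j, cl (α (D.xi j)) * cl (β (D.xi j)) := by
  have hexp : ∀ v : V, v = ∑ s, ⟪f s, v⟫_ℝ • f s + ∑ j, ⟪D.xi j, v⟫_ℝ • D.xi j := by
    intro v
    have hu := hf_span (v - ∑ j, ⟪D.xi j, v⟫_ℝ • D.xi j) (by
      intro i
      simp [inner_sub_right, inner_sum, inner_smul_right, D.xi_orthonormal])
    obtain ⟨c, hc⟩ := (Submodule.mem_span_range_iff_exists_fun ℝ).1 hu
    have hcs : ∀ s, c s = ⟪f s, v⟫_ℝ := by
      intro s
      have h1 : ⟪f s, ∑ t, c t • f t⟫_ℝ = c s := hf_on.inner_right_fintype c s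
      rw [← h1, hc, inner_sub_right, inner_sum]
      have h2 : ∀ j, ⟪f s, D.xi j⟫_ℝ = 0 := fun j => by
        rw [real_inner_comm]; exact hf_horiz s j
      simp [inner_smul_right, h2]
    simp only [← hcs, hc]
    abel
  have hb : ∀ x : V, ∑ i, ⟪x, b i⟫_ℝ • (cl (α x) * cl (β (b i))) = cl (α x) * cl (β x) := by
    intro x
    conv_rhs => rw [← aux_expand b x]
    rw [aux_expand b x]
    conv_rhs =>
      enter [2]
      rw [← aux_expand b x]
    simp [Finset.mul_sum, real_inner_comm]
  have h1 : ∀ i, cl (α (b i)) * cl (β (b i))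
      = ∑ s, ⟪f s, b i⟫_ℝ • (cl (α (f s)) * cl (β (b i)))
        + ∑ j, ⟪D.xi j, b i⟫_ℝ • (cl (α (D.xi j)) * cl (β (b i))) := by
    intro i
    have := congrArg (fun v => cl (α v) * cl (β (b i))) (hexp (b i))
    simpa only [map_add, map_sum, map_smul, add_mul, Finset.sum_mul, smul_mul_assoc] using this
  simp only [h1]
  rw [Finset.sum_add_distrib, Finset.sum_comm, 
    Finset.sum_comm (s := Finset.univ) (t := (Finset.univ : Finset (Fin 3)))]
  simp only [hb]

theorem aux_fin3 (p : Fin 3) : p + 1 + 1 = p + 2 ∧ p + 1 + 2 = p ∧ p + 2 + 1 = p ∧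
    p + 2 + 2 = p + 1 := by
  revert p; decide

/-- For `(p,q,r)` an even permutation of `(1,2,3)` (encoded as
`(p, p+1, p+2)`) and `f_1,…,f_{4n-4}` an orthonormal basis of the horizontal
space `H = ker η_1 ∩ ker η_2 ∩ ker η_3`, for every `ψ ∈ W`:
`Φ_p·(Φ_q·ψ) - Φ_q·(Φ_p·ψ) = -2Φ_r·ψ + Σ_s φ_p(f_s)·(φ_q(f_s)·ψ)`. -/
theorem statement_3 {n : ℕ} (hn : 1 ≤ n)
    (D : AlmostThreeContact V) (b : OrthonormalBasis (Fin (4 * n - 1)) ℝ V)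
    (cl : V →ₗ[ℝ] Module.End ℝ W) (hcl : IsCliffordAction cl)
    (f : Fin (4 * n - 4) → V) (hf_on : Orthonormal ℝ f)
    (hf_horiz : ∀ (s : Fin (4 * n - 4)) (i : Fin 3), ⟪D.xi i, f s⟫_ℝ = 0)
    (hf_span : ∀ v : V, (∀ i : Fin 3, ⟪D.xi i, v⟫_ℝ = 0) →
      v ∈ Submodule.span ℝ (Set.range f))
    (p : Fin 3) (ψ : W) :
    formAct b cl (Phi D p) (formAct b cl (Phi D (p + 1)) ψ)
      - formAct b cl (Phi D (p + 1)) (formAct b cl (Phi D p) ψ)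
    = (-2 : ℝ) • formAct b cl (Phi D (p + 2)) ψ
      + ∑ s : Fin (4 * n - 4), cl (D.phi p (f s)) (cl (D.phi (p + 1) (f s)) ψ) := by
  obtain ⟨a11, a12, a21, a22⟩ := aux_fin3 p
  set r := p + 2 with hr
  set q := p + 1 with hq
  have hF : ∀ i χ, formAct b cl (Phi D i) χ = ((1 / 2 : ℝ) • auxM b cl (D.phi i)) χ := by
    intro i χ
    rw [LinearMap.smul_apply, ← aux_formAct b cl hcl (D.phi i) (D.phi_skew i) χ, smul_smul]
    norm_num
    rfl
  have hpq : auxM b cl (D.phi p ∘ₗ D.phi q) = auxM b cl (D.phi r) + cl (D.xi p) * cl (D.xi q) := by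
    rw [← aux_rank b cl (D.xi p) (D.xi q)]
    simp only [auxM, ← Finset.sum_add_distrib]
    refine Finset.sum_congr rfl fun i _ => ?_
    have h := D.phi_comp r (b i)
    rw [a21, a22] at h
    rw [LinearMap.comp_apply, h, map_sub, sub_mul, map_smul, smul_mul_assoc, sub_add_cancel]
  have hqp : auxM b cl (D.phi q ∘ₗ D.phi p)
      = - auxM b cl (D.phi r) + cl (D.xi q) * cl (D.xi p) := by
    rw [← aux_rank b cl (D.xi q) (D.xi p)]
    simp only [auxM, ← Finset.sum_add_distrib, ← Finset.sum_neg_distrib]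
    refine Finset.sum_congr rfl fun i _ => ?_
    have h := D.phi_comp' r (b i)
    rw [a21, a22] at h
    rw [LinearMap.comp_apply, h, map_add, add_mul, map_smul, map_neg, smul_mul_assoc]
    noncomm_ring
  have hxx : cl (D.xi q) * cl (D.xi p) = - (cl (D.xi p) * cl (D.xi q)) := by
    have h := hcl (D.xi q) (D.xi p)
    have hne : q ≠ p := by rw [hq]; clear * -; revert p; decide
    rw [D.xi_orthonormal, if_neg hne] at h
    apply eq_neg_of_add_eq_zero_left
    simpa using h
  have hbr := aux_bracket b cl hcl (D.phi p) (D.phi q) (D.phi_skew p)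
  have htr := aux_trace b D cl (D.phi p) (D.phi q) f hf_on hf_horiz hf_span
  rw [aux_move b cl (D.phi p) (D.phi q) (D.phi_skew q)] at htr
  have hsum : ∑ j, cl (D.phi p (D.xi j)) * cl (D.phi q (D.xi j))
      = cl (D.xi p) * cl (D.xi q) := by
    have h3 : ∀ g : Fin 3 → Module.End ℝ W, ∑ j, g j = g p + g q + g r := by
      intro g
      rw [Fin.sum_univ_three, hq, hr]
      clear * -
      fin_cases p
      · rfl
      · change g 0 + g 1 + g 2 = g 1 + g 2 + g 0
        abel
      · change g 0 + g 1 + g 2 = g 2 + g 0 + g 1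
        abel
    rw [h3]
    have k1 := D.phi_xi' r
    have k2 := D.phi_xi q
    rw [a21, a22] at k1
    rw [a11, a12] at k2
    rw [D.phi_xi_self, D.phi_xi_self, k1, k2]
    simp [hxx]
  rw [hsum] at htr
  have hS : ∑ s, cl (D.phi p (f s)) * cl (D.phi q (f s))
      = (-1 : ℝ) • auxM b cl (D.phi p ∘ₗ D.phi q) - cl (D.xi p) * cl (D.xi q) := by
    rw [neg_one_smul, htr]; abel
  have main : ((1 / 2 : ℝ) • auxM b cl (D.phi p)) * ((1 / 2 : ℝ) • auxM b cl (D.phi q))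
      - ((1 / 2 : ℝ) • auxM b cl (D.phi q)) * ((1 / 2 : ℝ) • auxM b cl (D.phi p))
      = (-2 : ℝ) • ((1 / 2 : ℝ) • auxM b cl (D.phi r))
        + ∑ s, cl (D.phi p (f s)) * cl (D.phi q (f s)) := by
    simp only [smul_mul_assoc, mul_smul_comm, smul_smul, ← smul_sub]
    rw [hbr, hS, hpq, hqp, hxx]
    module
  have h := congrArg (fun T : Module.End ℝ W => T ψ) main
  simp only [hF]
  simpa only [LinearMap.sub_apply, LinearMap.add_apply, Module.End.mul_apply,
    LinearMap.sum_apply, LinearMap.smul_apply (-2 : ℝ)] using h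
end
end

section
/- For extended symmetric data: U(x_1,x_2) ∈ 𝔨 for all x_1, x_2 ∈ 𝔨; U(x,y) ∈ 𝔤_1 for all x ∈ 𝔨 and y ∈ 𝔤_1; and U(y_1,y_2) ∈ 𝔨 for all y_1, y_2 ∈ 𝔤_1. -/
noncomputable section

/- Context: *extended symmetric data* consists of a finite-dimensional real
semisimple Lie algebra `𝔤` with a `ℤ₂`-grading `𝔤 = 𝔤₀ ⊕ 𝔤₁`, a decomposition
`𝔤₀ = 𝔥 ⊕ 𝔨` into commuting Lie subalgebras, and nonzero reals `λ₀, λ₁` such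
that `g := λ₀ κ|𝔨 ⊥ λ₁ κ|𝔤₁` is positive definite on `𝔪 := 𝔨 ⊕ 𝔤₁` (`κ` the
Killing form).  `proj_𝔪` is the projection `𝔤 = 𝔥 ⊕ 𝔪 → 𝔪` along `𝔥`, `U` is
the symmetric bilinear map determined by
`2g(U(X,Y),Z) = g(proj_𝔪[Z,X],Y) + g(X,proj_𝔪[Z,Y])`, and the Nomizu map is
`Λ(X)Y = ½ proj_𝔪[X,Y] + U(X,Y)`. -/

/-- Extended symmetric data on a real Lie algebra `L` (semisimplicity and finite
dimensionality are imposed as typeclass assumptions in the theorems). -/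
structure ExtSymData (L : Type*) [LieRing L] [LieAlgebra ℝ L] where
  /-- the subalgebra `𝔥` -/
  H : Submodule ℝ L
  /-- the subalgebra `𝔨` -/
  K : Submodule ℝ L
  /-- the odd part `𝔤₁` of the grading -/
  G1 : Submodule ℝ L
  lam0 : ℝ
  lam1 : ℝ
  lam0_ne : lam0 ≠ 0
  lam1_ne : lam1 ≠ 0
  /-- `𝔥 ⊕ 𝔨` is a direct sum -/
  hHK_inf : H ⊓ K = ⊥
  /-- `𝔤₀ ⊕ 𝔤₁` is a direct sum -/
  hG0_inf : (H ⊔ K) ⊓ G1 = ⊥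
  /-- `𝔤 = 𝔥 ⊕ 𝔨 ⊕ 𝔤₁` -/
  h_top : H ⊔ K ⊔ G1 = ⊤
  /-- `𝔥` is a Lie subalgebra -/
  hH_sub : ∀ a ∈ H, ∀ b ∈ H, ⁅a, b⁆ ∈ H
  /-- `𝔨` is a Lie subalgebra -/
  hK_sub : ∀ a ∈ K, ∀ b ∈ K, ⁅a, b⁆ ∈ K
  /-- `[𝔥, 𝔨] = 0` -/
  hHK_comm : ∀ a ∈ H, ∀ b ∈ K, ⁅a, b⁆ = (0 : L)
  /-- `[𝔤₀, 𝔤₁] ⊆ 𝔤₁` -/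
  hG0G1 : ∀ a ∈ H ⊔ K, ∀ b ∈ G1, ⁅a, b⁆ ∈ G1
  /-- `[𝔤₁, 𝔤₁] ⊆ 𝔤₀` -/
  hG1G1 : ∀ a ∈ G1, ∀ b ∈ G1, ⁅a, b⁆ ∈ H ⊔ K
  /-- the metric `g` -/
  gform : L →ₗ[ℝ] L →ₗ[ℝ] ℝ
  gform_K : ∀ x ∈ K, ∀ x' ∈ K, gform x x' = lam0 * killingForm ℝ L x x'
  gform_G1 : ∀ y ∈ G1, ∀ y' ∈ G1, gform y y' = lam1 * killingForm ℝ L y y'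
  gform_KG1 : ∀ x ∈ K, ∀ y ∈ G1, gform x y = 0
  gform_G1K : ∀ x ∈ K, ∀ y ∈ G1, gform y x = 0
  /-- `g` is positive definite on `𝔪 = 𝔨 ⊕ 𝔤₁` -/
  gform_posdef : ∀ v ∈ K ⊔ G1, v ≠ 0 → 0 < gform v v
  /-- the projection `proj_𝔪 : 𝔤 = 𝔥 ⊕ 𝔪 → 𝔪` along `𝔥` -/
  projm : L →ₗ[ℝ] L
  projm_H : ∀ h ∈ H, projm h = 0
  projm_m : ∀ m ∈ K ⊔ G1, projm m = m
  /-- the symmetric bilinear map `U` -/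
  Ubil : L →ₗ[ℝ] L →ₗ[ℝ] L
  Ubil_symm : ∀ X Y : L, Ubil X Y = Ubil Y X
  Ubil_mem : ∀ X ∈ K ⊔ G1, ∀ Y ∈ K ⊔ G1, Ubil X Y ∈ K ⊔ G1
  Ubil_def : ∀ X ∈ K ⊔ G1, ∀ Y ∈ K ⊔ G1, ∀ Z ∈ K ⊔ G1,
    2 * gform (Ubil X Y) Z = gform (projm ⁅Z, X⁆) Y + gform X (projm ⁅Z, Y⁆)

variable {L : Type*} [LieRing L] [LieAlgebra ℝ L]

/-- The Nomizu map `Λ(X)Y = ½ proj_𝔪 ⁅X,Y⁆ + U(X,Y)` of the Levi-Civita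
connection. -/
def nomizu (D : ExtSymData L) (X Y : L) : L :=
  (2⁻¹ : ℝ) • D.projm ⁅X, Y⁆ + D.Ubil X Y

theorem mem_K_of_orth (D : ExtSymData L) (u : L) (hu : u ∈ D.K ⊔ D.G1)
    (h : ∀ z ∈ D.G1, D.gform u z = 0) : u ∈ D.K := by
  obtain ⟨k, hk, y, hy, rfl⟩ := Submodule.mem_sup.1 hu
  have h1 := h y hy
  rw [map_add, LinearMap.add_apply, D.gform_KG1 k hk y hy, zero_add] at h1
  by_cases h0 : y = 0
  · simpa [h0] using hk
  · exact absurd h1 (D.gform_posdef y (Submodule.mem_sup_right hy) h0).ne'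

theorem mem_G1_of_orth (D : ExtSymData L) (u : L) (hu : u ∈ D.K ⊔ D.G1)
    (h : ∀ z ∈ D.K, D.gform u z = 0) : u ∈ D.G1 := by
  obtain ⟨k, hk, y, hy, rfl⟩ := Submodule.mem_sup.1 hu
  have h1 := h k hk
  rw [map_add, LinearMap.add_apply, D.gform_G1K k hk y hy, add_zero] at h1
  by_cases h0 : k = 0
  · simpa [h0] using hy
  · exact absurd h1 (D.gform_posdef k (Submodule.mem_sup_left hk) h0).ne'

theorem projm_G0_mem (D : ExtSymData L) (a : L) (ha : a ∈ D.H ⊔ D.K) : D.projm a ∈ D.K := by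
  obtain ⟨h, hh, k, hk, rfl⟩ := Submodule.mem_sup.1 ha
  rw [map_add, D.projm_H h hh, zero_add, D.projm_m k (Submodule.mem_sup_left hk)]
  exact hk

theorem projm_K_G1 (D : ExtSymData L) (x : L) (hx : x ∈ D.K) (y : L) (hy : y ∈ D.G1) :
    D.projm ⁅x, y⁆ ∈ D.G1 := by
  have h := D.hG0G1 x (Submodule.mem_sup_right hx) y hy
  rw [D.projm_m _ (Submodule.mem_sup_right h)]
  exact h

theorem projm_G1_K (D : ExtSymData L) (x : L) (hx : x ∈ D.K) (y : L) (hy : y ∈ D.G1) :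
    D.projm ⁅y, x⁆ ∈ D.G1 := by
  rw [← lie_skew, map_neg]
  exact D.G1.neg_mem (projm_K_G1 D x hx y hy)

/-- For extended symmetric data: `U(𝔨,𝔨) ⊆ 𝔨`,
`U(𝔨,𝔤₁) ⊆ 𝔤₁`, and `U(𝔤₁,𝔤₁) ⊆ 𝔨`. -/
theorem statement_7 [FiniteDimensional ℝ L] [LieAlgebra.IsSemisimple ℝ L]
    (D : ExtSymData L) :
    (∀ x₁ ∈ D.K, ∀ x₂ ∈ D.K, D.Ubil x₁ x₂ ∈ D.K) ∧
    (∀ x ∈ D.K, ∀ y ∈ D.G1, D.Ubil x y ∈ D.G1) ∧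
    (∀ y₁ ∈ D.G1, ∀ y₂ ∈ D.G1, D.Ubil y₁ y₂ ∈ D.K) := by
  have iK : ∀ x ∈ D.K, x ∈ D.K ⊔ D.G1 := fun x hx => Submodule.mem_sup_left hx
  have iG : ∀ x ∈ D.G1, x ∈ D.K ⊔ D.G1 := fun x hx => Submodule.mem_sup_right hx
  refine ⟨fun a ha b hb => ?_, fun a ha b hb => ?_, fun a ha b hb => ?_⟩
  · refine mem_K_of_orth D _ (D.Ubil_mem a (iK a ha) b (iK b hb)) fun z hz => ?_
    have h := D.Ubil_def a (iK a ha) b (iK b hb) z (iG z hz)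
    rw [D.gform_G1K b hb _ (projm_G1_K D a ha z hz),
      D.gform_KG1 a ha _ (projm_G1_K D b hb z hz)] at h
    linarith
  · refine mem_G1_of_orth D _ (D.Ubil_mem a (iK a ha) b (iG b hb)) fun z hz => ?_
    have h := D.Ubil_def a (iK a ha) b (iG b hb) z (iK z hz)
    rw [D.gform_KG1 _ (projm_G0_mem D _ (Submodule.mem_sup_right (D.hK_sub z hz a ha))) b hb,
      D.gform_KG1 a ha _ (projm_K_G1 D z hz b hb)] at h
    linarith
  · refine mem_K_of_orth D _ (D.Ubil_mem a (iG a ha) b (iG b hb)) fun z hz => ?_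
    have h := D.Ubil_def a (iG a ha) b (iG b hb) z (iG z hz)
    rw [D.gform_KG1 _ (projm_G0_mem D _ (D.hG1G1 z hz a ha)) b hb,
      D.gform_G1K _ (projm_G0_mem D _ (D.hG1G1 z hz b hb)) a ha] at h
    linarith
end
end

section
/- For extended symmetric data: (a) for every x ∈ 𝔨 the operator ad(x) maps 𝔪 into 𝔪 and its restriction to 𝔪 belongs to so(𝔪)_0; (b) for every y ∈ 𝔤_1 the operator proj_𝔪 ∘ ad(y), restricted to 𝔪, maps 𝔨 into 𝔤_1 and 𝔤_1 into 𝔨; (c) Λ(x) ∈ so(𝔪)_0 for every x ∈ 𝔨; (d) Λ(y) ∈ so(𝔪)_1 for every y ∈ 𝔤_1. -/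
noncomputable section

variable {L : Type*} [LieRing L] [LieAlgebra ℝ L]

namespace ExtSymData

lemma memK (D : ExtSymData L) {x : L} (hx : x ∈ D.K) : x ∈ D.K ⊔ D.G1 :=
  Submodule.mem_sup_left hx

lemma memG (D : ExtSymData L) {x : L} (hx : x ∈ D.G1) : x ∈ D.K ⊔ D.G1 :=
  Submodule.mem_sup_right hx

lemma kf_symm (x y : L) : killingForm ℝ L x y = killingForm ℝ L y x :=
  LieModule.traceForm_comm ℝ L L x y

lemma kf_inv (x y z : L) : killingForm ℝ L ⁅x, y⁆ z + killingForm ℝ L y ⁅x, z⁆ = 0 := by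
  rw [← lie_skew x y, map_neg, LinearMap.neg_apply]
  have := LieModule.traceForm_apply_lie_apply ℝ L L y x z
  change killingForm ℝ L ⁅y, x⁆ z = killingForm ℝ L y ⁅x, z⁆ at this
  linarith

lemma g_symm (D : ExtSymData L) {m m' : L} (hm : m ∈ D.K ⊔ D.G1) (hm' : m' ∈ D.K ⊔ D.G1) :
    D.gform m m' = D.gform m' m := by
  obtain ⟨a, ha, b, hb, rfl⟩ := Submodule.mem_sup.1 hm
  obtain ⟨c, hc, d, hd, rfl⟩ := Submodule.mem_sup.1 hm'
  simp only [map_add, LinearMap.add_apply, D.gform_K a ha c hc, D.gform_K c hc a ha,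
    D.gform_G1 b hb d hd, D.gform_G1 d hd b hb, D.gform_KG1 a ha d hd, D.gform_KG1 c hc b hb,
    D.gform_G1K a ha d hd, D.gform_G1K c hc b hb, kf_symm a c, kf_symm b d]

lemma lieKG (D : ExtSymData L) {x y : L} (hx : x ∈ D.K) (hy : y ∈ D.G1) : ⁅x, y⁆ ∈ D.G1 :=
  D.hG0G1 x (Submodule.mem_sup_right hx) y hy

lemma lieGK (D : ExtSymData L) {x y : L} (hx : x ∈ D.K) (hy : y ∈ D.G1) : ⁅y, x⁆ ∈ D.G1 := by
  rw [← lie_skew]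
  exact D.G1.neg_mem (D.lieKG hx hy)

lemma proj_mem (D : ExtSymData L) (v : L) : D.projm v ∈ D.K ⊔ D.G1 := by
  have hv : v ∈ D.H ⊔ (D.K ⊔ D.G1) := by
    rw [← sup_assoc, D.h_top]; trivial
  obtain ⟨a, ha, b, hb, rfl⟩ := Submodule.mem_sup.1 hv
  rw [map_add, D.projm_H a ha, D.projm_m b hb, zero_add]
  exact hb

lemma proj_GK (D : ExtSymData L) {x y : L} (hx : x ∈ D.K) (hy : y ∈ D.G1) :
    D.projm ⁅y, x⁆ ∈ D.G1 := by
  rw [D.projm_m _ (D.memG (D.lieGK hx hy))]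
  exact D.lieGK hx hy

lemma proj_KG (D : ExtSymData L) {x y : L} (hx : x ∈ D.K) (hy : y ∈ D.G1) :
    D.projm ⁅x, y⁆ ∈ D.G1 := by
  rw [D.projm_m _ (D.memG (D.lieKG hx hy))]
  exact D.lieKG hx hy

lemma proj_KK (D : ExtSymData L) {x y : L} (hx : x ∈ D.K) (hy : y ∈ D.K) :
    D.projm ⁅x, y⁆ ∈ D.K := by
  rw [D.projm_m _ (D.memK (D.hK_sub x hx y hy))]
  exact D.hK_sub x hx y hy

lemma proj_GG (D : ExtSymData L) {x y : L} (hx : x ∈ D.G1) (hy : y ∈ D.G1) :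
    D.projm ⁅x, y⁆ ∈ D.K := by
  obtain ⟨a, ha, b, hb, hab⟩ := Submodule.mem_sup.1 (D.hG1G1 x hx y hy)
  rw [← hab, map_add, D.projm_H a ha, D.projm_m b (D.memK hb), zero_add]
  exact hb

lemma mem_K_of (D : ExtSymData L) {v : L} (hv : v ∈ D.K ⊔ D.G1)
    (h : ∀ z ∈ D.G1, 2 * D.gform v z = 0) : v ∈ D.K := by
  obtain ⟨a, ha, b, hb, rfl⟩ := Submodule.mem_sup.1 hv
  have h1 := h b hb
  rw [map_add, LinearMap.add_apply, D.gform_KG1 a ha b hb] at h1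
  by_cases hb0 : b = 0
  · simpa [hb0] using ha
  · have := D.gform_posdef b (D.memG hb) hb0
    linarith

lemma mem_G_of (D : ExtSymData L) {v : L} (hv : v ∈ D.K ⊔ D.G1)
    (h : ∀ z ∈ D.K, 2 * D.gform v z = 0) : v ∈ D.G1 := by
  obtain ⟨a, ha, b, hb, rfl⟩ := Submodule.mem_sup.1 hv
  have h1 := h a ha
  rw [map_add, LinearMap.add_apply, D.gform_G1K a ha b hb] at h1
  by_cases ha0 : a = 0
  · simpa [ha0] using hb
  · have := D.gform_posdef a (D.memK ha) ha0
    linarith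

lemma U_KK (D : ExtSymData L) {x y : L} (hx : x ∈ D.K) (hy : y ∈ D.K) : D.Ubil x y ∈ D.K := by
  refine D.mem_K_of (D.Ubil_mem x (D.memK hx) y (D.memK hy)) fun z hz => ?_
  rw [D.Ubil_def x (D.memK hx) y (D.memK hy) z (D.memG hz),
    D.gform_G1K y hy _ (D.proj_GK hx hz), D.gform_KG1 x hx _ (D.proj_GK hy hz), add_zero]

lemma U_GG (D : ExtSymData L) {x y : L} (hx : x ∈ D.G1) (hy : y ∈ D.G1) : D.Ubil x y ∈ D.K := by
  refine D.mem_K_of (D.Ubil_mem x (D.memG hx) y (D.memG hy)) fun z hz => ?_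
  rw [D.Ubil_def x (D.memG hx) y (D.memG hy) z (D.memG hz),
    D.gform_KG1 _ (D.proj_GG hz hx) y hy, D.gform_G1K _ (D.proj_GG hz hy) x hx, add_zero]

lemma U_KG (D : ExtSymData L) {x y : L} (hx : x ∈ D.K) (hy : y ∈ D.G1) : D.Ubil x y ∈ D.G1 := by
  refine D.mem_G_of (D.Ubil_mem x (D.memK hx) y (D.memG hy)) fun z hz => ?_
  rw [D.Ubil_def x (D.memK hx) y (D.memG hy) z (D.memK hz),
    D.gform_KG1 _ (D.proj_KK hz hx) y hy, D.gform_KG1 x hx _ (D.proj_KG hz hy), add_zero]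

lemma ad_skew (D : ExtSymData L) {x m m' : L} (hx : x ∈ D.K) (hm : m ∈ D.K ⊔ D.G1)
    (hm' : m' ∈ D.K ⊔ D.G1) : D.gform ⁅x, m⁆ m' + D.gform m ⁅x, m'⁆ = 0 := by
  obtain ⟨a, ha, b, hb, rfl⟩ := Submodule.mem_sup.1 hm
  obtain ⟨c, hc, d, hd, rfl⟩ := Submodule.mem_sup.1 hm'
  have xa := D.hK_sub x hx a ha
  have xc := D.hK_sub x hx c hc
  have xb := D.lieKG hx hb
  have xd := D.lieKG hx hd
  simp only [lie_add, map_add, LinearMap.add_apply, D.gform_K _ xa c hc, D.gform_K a ha _ xc,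
    D.gform_G1 _ xb d hd, D.gform_G1 b hb _ xd, D.gform_KG1 _ xa d hd, D.gform_KG1 a ha _ xd,
    D.gform_G1K c hc _ xb, D.gform_G1K _ xc b hb]
  linear_combination D.lam0 * kf_inv x a c + D.lam1 * kf_inv x b d

lemma nomizu_skew (D : ExtSymData L) {x m m' : L} (hx : x ∈ D.K ⊔ D.G1) (hm : m ∈ D.K ⊔ D.G1)
    (hm' : m' ∈ D.K ⊔ D.G1) :
    D.gform (nomizu D x m) m' + D.gform m (nomizu D x m') = 0 := by
  have h1 := D.Ubil_def x hx m hm m' hm'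
  have h2 := D.Ubil_def x hx m' hm' m hm
  have h3 := D.g_symm hm (D.Ubil_mem x hx m' hm')
  have h4 := D.g_symm hm (D.proj_mem ⁅x, m'⁆)
  rw [← lie_skew m' x, map_neg, map_neg, LinearMap.neg_apply] at h1
  rw [← lie_skew m x, ← lie_skew m m', map_neg, map_neg, map_neg, map_neg,
    LinearMap.neg_apply] at h2
  simp only [nomizu, map_add, map_smul, LinearMap.add_apply, LinearMap.smul_apply, smul_eq_mul]
  rw [h3, h4]
  linarith

end ExtSymData

/-- For extended symmetric data:
(a) for `x ∈ 𝔨`, `ad(x)` preserves `𝔪` (indeed `𝔨` and `𝔤₁` separately) and is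
`g`-skew on `𝔪`, i.e. `ad(x)|𝔪 ∈ so(𝔪)₀`;
(b) for `y ∈ 𝔤₁`, `proj_𝔪 ∘ ad(y)` maps `𝔨` into `𝔤₁` and `𝔤₁` into `𝔨`;
(c) for `x ∈ 𝔨`, `Λ(x) ∈ so(𝔪)₀`;
(d) for `y ∈ 𝔤₁`, `Λ(y) ∈ so(𝔪)₁`. -/
theorem statement_8 [FiniteDimensional ℝ L] [LieAlgebra.IsSemisimple ℝ L]
    (D : ExtSymData L) :
    -- (a)
    (∀ x ∈ D.K,
      (∀ x' ∈ D.K, ⁅x, x'⁆ ∈ D.K) ∧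
      (∀ y ∈ D.G1, ⁅x, y⁆ ∈ D.G1) ∧
      (∀ m ∈ D.K ⊔ D.G1, ∀ m' ∈ D.K ⊔ D.G1,
        D.gform ⁅x, m⁆ m' + D.gform m ⁅x, m'⁆ = 0)) ∧
    -- (b)
    (∀ y ∈ D.G1,
      (∀ x ∈ D.K, D.projm ⁅y, x⁆ ∈ D.G1) ∧
      (∀ y' ∈ D.G1, D.projm ⁅y, y'⁆ ∈ D.K)) ∧
    -- (c)
    (∀ x ∈ D.K,
      (∀ x' ∈ D.K, nomizu D x x' ∈ D.K) ∧
      (∀ y ∈ D.G1, nomizu D x y ∈ D.G1) ∧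
      (∀ m ∈ D.K ⊔ D.G1, ∀ m' ∈ D.K ⊔ D.G1,
        D.gform (nomizu D x m) m' + D.gform m (nomizu D x m') = 0)) ∧
    -- (d)
    (∀ y ∈ D.G1,
      (∀ x ∈ D.K, nomizu D y x ∈ D.G1) ∧
      (∀ y' ∈ D.G1, nomizu D y y' ∈ D.K) ∧
      (∀ m ∈ D.K ⊔ D.G1, ∀ m' ∈ D.K ⊔ D.G1,
        D.gform (nomizu D y m) m' + D.gform m (nomizu D y m') = 0)) := by
  refine ⟨fun x hx => ⟨fun x' hx' => D.hK_sub x hx x' hx', fun y hy => D.lieKG hx hy,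
      fun m hm m' hm' => D.ad_skew hx hm hm'⟩,
    fun y hy => ⟨fun x hx => D.proj_GK hx hy, fun y' hy' => D.proj_GG hy hy'⟩,
    fun x hx => ⟨fun x' hx' => ?_, fun y hy => ?_,
      fun m hm m' hm' => D.nomizu_skew (D.memK hx) hm hm'⟩,
    fun y hy => ⟨fun x hx => ?_, fun y' hy' => ?_,
      fun m hm m' hm' => D.nomizu_skew (D.memG hy) hm hm'⟩⟩
  · exact D.K.add_mem (D.K.smul_mem _ (D.proj_KK hx hx')) (D.U_KK hx hx')
  · exact D.G1.add_mem (D.G1.smul_mem _ (D.proj_KG hx hy)) (D.U_KG hx hy)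
  · refine D.G1.add_mem (D.G1.smul_mem _ (D.proj_GK hx hy)) ?_
    rw [D.Ubil_symm]
    exact D.U_KG hx hy
  · exact D.K.add_mem (D.K.smul_mem _ (D.proj_GG hy hy')) (D.U_GG hy hy')
end
end

section
/- For all A, B ∈ 𝔪': Λ'(A)B − Λ'(B)A = proj_{𝔪'}([A,B]), where [A,B] is the bracket of 𝔤^ℂ (which lies in 𝔤'). -/
noncomputable section

variable {L : Type*} [LieRing L] [LieAlgebra ℝ L]

open scoped TensorProduct

/-- The embedding `v ↦ 1 ⊗ v` of `𝔤` into `𝔤^ℂ = ℂ ⊗[ℝ] 𝔤`. -/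
def iota1 {L : Type*} [LieRing L] [LieAlgebra ℝ L] : L →ₗ[ℝ] ℂ ⊗[ℝ] L :=
  TensorProduct.mk ℝ ℂ L 1

/-- The map `v ↦ i ⊗ v` of `𝔤` into `𝔤^ℂ = ℂ ⊗[ℝ] 𝔤`. -/
def iotaI {L : Type*} [LieRing L] [LieAlgebra ℝ L] : L →ₗ[ℝ] ℂ ⊗[ℝ] L :=
  TensorProduct.mk ℝ ℂ L Complex.I

/-- The value `Λ'(x + iy)(x' + iy')` of the dual Nomizu map, written out in
components:
`Λ'(x+iy)(x'+iy') = 1 ⊗ (Λ(x)x' - Λ(y)y') + i ⊗ (2[x,y'] - Λ(x)y' - Λ(y)x')`,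
which is exactly the piecewise definition
`Λ'(x)x' = Λ(x)x'`, `Λ'(x)(iy') = i(2[x,y'] - Λ(x)y')`,
`Λ'(iy)x' = -i Λ(y)x'`, `Λ'(iy)(iy') = -Λ(y)y'`. -/
def nomizuDual (D : ExtSymData L) (x y x' y' : L) : ℂ ⊗[ℝ] L :=
  iota1 (nomizu D x x' - nomizu D y y')
    + iotaI ((2 : ℝ) • ⁅x, y'⁆ - nomizu D x y' - nomizu D y x')

/-- For all `A, B ∈ 𝔪' = 𝔨 ⊕ i𝔤₁`:
`Λ'(A)B - Λ'(B)A = proj_{𝔪'}([A,B])`, where `[A,B]` is the bracket of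
`𝔤^ℂ = ℂ ⊗[ℝ] 𝔤` and `proj_{𝔪'}` is (any `ℝ`-linear extension of) the
projection `𝔤' = 𝔥 ⊕ 𝔪' → 𝔪'` along `𝔥`. -/
theorem statement_10 [FiniteDimensional ℝ L] [LieAlgebra.IsSemisimple ℝ L]
    (D : ExtSymData L)
    (proj' : (ℂ ⊗[ℝ] L) →ₗ[ℝ] ℂ ⊗[ℝ] L)
    (hproj'_H : ∀ h ∈ D.H, proj' (iota1 h) = 0)
    (hproj'_K : ∀ x ∈ D.K, proj' (iota1 x) = iota1 x)
    (hproj'_G1 : ∀ y ∈ D.G1, proj' (iotaI y) = iotaI y)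
    (x : L) (hx : x ∈ D.K) (y : L) (hy : y ∈ D.G1)
    (x' : L) (hx' : x' ∈ D.K) (y' : L) (hy' : y' ∈ D.G1) :
    nomizuDual D x y x' y' - nomizuDual D x' y' x y
      = proj' ⁅iota1 x + iotaI y, iota1 x' + iotaI y'⁆ := by
  have hbr : ∀ (a b : ℂ) (u v : L), ⁅a ⊗ₜ[ℝ] u, b ⊗ₜ[ℝ] v⁆ = (a * b) ⊗ₜ[ℝ] ⁅u, v⁆ :=
    fun a b u v => LieAlgebra.ExtendScalars.bracket_tmul ℝ ℂ L L a b u v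
  have e11 : ∀ u v : L, ⁅(iota1 u : ℂ ⊗[ℝ] L), iota1 v⁆ = iota1 ⁅u, v⁆ := by
    intro u v; simp [iota1, hbr]
  have e1I : ∀ u v : L, ⁅(iota1 u : ℂ ⊗[ℝ] L), iotaI v⁆ = iotaI ⁅u, v⁆ := by
    intro u v; simp [iota1, iotaI, hbr]
  have eI1 : ∀ u v : L, ⁅(iotaI u : ℂ ⊗[ℝ] L), iota1 v⁆ = iotaI ⁅u, v⁆ := by
    intro u v; simp [iota1, iotaI, hbr]
  have eII : ∀ u v : L, ⁅(iotaI u : ℂ ⊗[ℝ] L), iotaI v⁆ = - iota1 ⁅u, v⁆ := by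
    intro u v; simp [iota1, iotaI, hbr, TensorProduct.neg_tmul]
  have hp0 : ∀ w ∈ D.H ⊔ D.K, proj' (iota1 w) = iota1 (D.projm w) := by
    intro w hw
    obtain ⟨h, hh, k, hk, rfl⟩ := Submodule.mem_sup.mp hw
    rw [map_add, map_add, map_add, hproj'_H h hh, hproj'_K k hk, D.projm_H h hh,
      D.projm_m k (Submodule.mem_sup_left hk)]
    simp
  have hxy' : ⁅x, y'⁆ ∈ D.G1 := D.hG0G1 x (Submodule.mem_sup_right hx) y' hy'
  have hx'y : ⁅x', y⁆ ∈ D.G1 := D.hG0G1 x' (Submodule.mem_sup_right hx') y hy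
  have hxx : ⁅x, x'⁆ ∈ D.H ⊔ D.K := Submodule.mem_sup_right (D.hK_sub x hx x' hx')
  have hyy := D.hG1G1 y hy y' hy'
  have s1 : ⁅x', x⁆ = -⁅x, x'⁆ := (lie_skew _ _).symm
  have s2 : ⁅y', y⁆ = -⁅y, y'⁆ := (lie_skew _ _).symm
  have s3 : ⁅y, x'⁆ = -⁅x', y⁆ := (lie_skew _ _).symm
  have s4 : ⁅y', x⁆ = -⁅x, y'⁆ := (lie_skew _ _).symm
  have hla : ∀ a b c : ℂ ⊗[ℝ] L, ⁅a, b + c⁆ = ⁅a, b⁆ + ⁅a, c⁆ :=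
    fun a b c => LieRing.lie_add a b c
  have hal : ∀ a b c : ℂ ⊗[ℝ] L, ⁅a + b, c⁆ = ⁅a, c⁆ + ⁅b, c⁆ :=
    fun a b c => LieRing.add_lie a b c
  rw [hla, hal, hal, e11, e1I, eI1, eII, s3]
  simp only [map_add, map_neg]
  rw [hp0 _ hxx, hp0 _ hyy, hproj'_G1 _ hxy', hproj'_G1 _ hx'y]
  simp only [nomizuDual, nomizu, s1, s2, s3, s4, D.Ubil_symm x' x, D.Ubil_symm y' y,
    D.Ubil_symm x' y, D.Ubil_symm y' x, map_add, map_sub, map_neg, map_smul,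
    D.projm_m _ (Submodule.mem_sup_right hxy'), D.projm_m _ (Submodule.mem_sup_right hx'y)]
  module
end
end

section
/- Λ' coincides with the Nomizu map of the dual data: for all A, B ∈ 𝔪', Λ'(A)B = (1/2)proj_{𝔪'}([A,B]) + U'(A,B), where U' : 𝔪' × 𝔪' → 𝔪' is the symmetric bilinear map determined by 2g'(U'(A,B),C) = g'(proj_{𝔪'}([C,A]),B) + g'(A, proj_{𝔪'}([C,B])) for all C ∈ 𝔪'. -/
noncomputable section

variable {L : Type*} [LieRing L] [LieAlgebra ℝ L]

open scoped TensorProduct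

/-- The real subspace `𝔪' = 𝔨 ⊕ i𝔤₁` of `𝔤^ℂ`. -/
def mDual (D : ExtSymData L) : Submodule ℝ (ℂ ⊗[ℝ] L) :=
  D.K.map iota1 ⊔ D.G1.map iotaI

lemma aux_lie (x y x' y' : L) :
    ⁅(iota1 x + iotaI y : ℂ ⊗[ℝ] L), iota1 x' + iotaI y'⁆
      = iota1 (⁅x, x'⁆ - ⁅y, y'⁆) + iotaI (⁅x, y'⁆ + ⁅y, x'⁆) := by
  simp only [iota1, iotaI, TensorProduct.mk_apply, add_lie, lie_add,
    LieAlgebra.ExtendScalars.bracket_tmul, one_mul, mul_one, Complex.I_mul_I,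
    TensorProduct.neg_tmul, TensorProduct.tmul_sub, TensorProduct.tmul_add]
  abel

lemma aux_K_lie (D : ExtSymData L) {x y : L} (hx : x ∈ D.K) (hy : y ∈ D.G1) : ⁅x, y⁆ ∈ D.G1 :=
  D.hG0G1 x (Submodule.mem_sup_right hx) y hy

lemma aux_lie_K (D : ExtSymData L) {x y : L} (hx : x ∈ D.K) (hy : y ∈ D.G1) : ⁅y, x⁆ ∈ D.G1 := by
  rw [← lie_skew]
  exact D.G1.neg_mem (aux_K_lie D hx hy)

lemma aux_decomp (D : ExtSymData L) {y y' : L} (hy : y ∈ D.G1) (hy' : y' ∈ D.G1) :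
    ∃ h ∈ D.H, ∃ k ∈ D.K, ⁅y, y'⁆ = h + k ∧ D.projm ⁅y, y'⁆ = k := by
  obtain ⟨h, hh, k, hk, e⟩ := Submodule.mem_sup.1 (D.hG1G1 y hy y' hy')
  refine ⟨h, hh, k, hk, e.symm, ?_⟩
  rw [← e, map_add, D.projm_H h hh, D.projm_m k (Submodule.mem_sup_left hk), zero_add]

lemma aux_pK (D : ExtSymData L) {y y' : L} (hy : y ∈ D.G1) (hy' : y' ∈ D.G1) :
    D.projm ⁅y, y'⁆ ∈ D.K := by
  obtain ⟨h, hh, k, hk, _, e⟩ := aux_decomp D hy hy'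
  rw [e]; exact hk

lemma aux_inv (a b c : L) : killingForm ℝ L ⁅a, b⁆ c = - killingForm ℝ L b ⁅a, c⁆ := by
  rw [← lie_skew, map_neg, LinearMap.neg_apply]
  congr 1
  exact LieModule.traceForm_apply_lie_apply ℝ L L b a c

lemma aux_comm_s11 (a b : L) : killingForm ℝ L a b = killingForm ℝ L b a :=
  LieModule.traceForm_comm ℝ L L a b

lemma aux_invK (D : ExtSymData L) {a b c : L} (ha : a ∈ D.K) (hb : b ∈ D.K) (hc : c ∈ D.K) :
    D.gform ⁅a, b⁆ c + D.gform b ⁅a, c⁆ = 0 := by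
  rw [D.gform_K _ (D.hK_sub a ha b hb) _ hc, D.gform_K _ hb _ (D.hK_sub a ha c hc), aux_inv]
  ring

lemma aux_invG (D : ExtSymData L) {a b c : L} (ha : a ∈ D.K) (hb : b ∈ D.G1) (hc : c ∈ D.G1) :
    D.gform ⁅a, b⁆ c + D.gform b ⁅a, c⁆ = 0 := by
  rw [D.gform_G1 _ (aux_K_lie D ha hb) _ hc, D.gform_G1 _ hb _ (aux_K_lie D ha hc), aux_inv]
  ring

lemma aux_symG (D : ExtSymData L) {b c : L} (hb : b ∈ D.G1) (hc : c ∈ D.G1) :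
    D.gform b c = D.gform c b := by
  rw [D.gform_G1 _ hb _ hc, D.gform_G1 _ hc _ hb, aux_comm_s11]

lemma aux_symK (D : ExtSymData L) {b c : L} (hb : b ∈ D.K) (hc : c ∈ D.K) :
    D.gform b c = D.gform c b := by
  rw [D.gform_K _ hb _ hc, D.gform_K _ hc _ hb, aux_comm_s11]

lemma aux_zero (D : ExtSymData L) {v : L} (hv : v ∈ D.K ⊔ D.G1) (h : D.gform v v = 0) : v = 0 := by
  by_contra hne
  exact absurd h (D.gform_posdef v hv hne).ne'

lemma aux_pm_K (D : ExtSymData L) {v : L} (hv : v ∈ D.K) : D.projm v = v :=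
  D.projm_m v (Submodule.mem_sup_left hv)

lemma aux_pm_G (D : ExtSymData L) {v : L} (hv : v ∈ D.G1) : D.projm v = v :=
  D.projm_m v (Submodule.mem_sup_right hv)

lemma aux_UKK (D : ExtSymData L) {x x' : L} (hx : x ∈ D.K) (hx' : x' ∈ D.K) :
    D.Ubil x x' = 0 := by
  have L' : ∀ {v}, v ∈ D.K → v ∈ D.K ⊔ D.G1 := fun h => Submodule.mem_sup_left h
  have R' : ∀ {v}, v ∈ D.G1 → v ∈ D.K ⊔ D.G1 := fun h => Submodule.mem_sup_right h
  have hm := D.Ubil_mem x (L' hx) x' (L' hx')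
  obtain ⟨a, ha, b, hb, e⟩ := Submodule.mem_sup.1 hm
  have h1 := D.Ubil_def x (L' hx) x' (L' hx') a (L' ha)
  have h2 := D.Ubil_def x (L' hx) x' (L' hx') b (R' hb)
  rw [aux_pm_K D (D.hK_sub a ha x hx), aux_pm_K D (D.hK_sub a ha x' hx'),
    aux_invK D ha hx hx'] at h1
  rw [aux_pm_G D (aux_lie_K D hx hb), aux_pm_G D (aux_lie_K D hx' hb),
    D.gform_G1K x' hx' _ (aux_lie_K D hx hb), D.gform_KG1 x hx _ (aux_lie_K D hx' hb)] at h2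
  apply aux_zero D hm
  nth_rewrite 2 [← e]
  rw [map_add]; linarith

lemma aux_UGG (D : ExtSymData L) {y y' : L} (hy : y ∈ D.G1) (hy' : y' ∈ D.G1) :
    D.Ubil y y' = 0 := by
  have L' : ∀ {v}, v ∈ D.K → v ∈ D.K ⊔ D.G1 := fun h => Submodule.mem_sup_left h
  have R' : ∀ {v}, v ∈ D.G1 → v ∈ D.K ⊔ D.G1 := fun h => Submodule.mem_sup_right h
  have hm := D.Ubil_mem y (R' hy) y' (R' hy')
  obtain ⟨a, ha, b, hb, e⟩ := Submodule.mem_sup.1 hm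
  have h1 := D.Ubil_def y (R' hy) y' (R' hy') a (L' ha)
  have h2 := D.Ubil_def y (R' hy) y' (R' hy') b (R' hb)
  rw [aux_pm_G D (aux_K_lie D ha hy), aux_pm_G D (aux_K_lie D ha hy'),
    aux_invG D ha hy hy'] at h1
  rw [D.gform_KG1 _ (aux_pK D hb hy) _ hy', D.gform_G1K _ (aux_pK D hb hy') _ hy] at h2
  apply aux_zero D hm
  nth_rewrite 2 [← e]
  rw [map_add]; linarith

lemma aux_UKG (D : ExtSymData L) {x y : L} (hx : x ∈ D.K) (hy : y ∈ D.G1) :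
    D.Ubil x y ∈ D.G1 := by
  have L' : ∀ {v}, v ∈ D.K → v ∈ D.K ⊔ D.G1 := fun h => Submodule.mem_sup_left h
  have R' : ∀ {v}, v ∈ D.G1 → v ∈ D.K ⊔ D.G1 := fun h => Submodule.mem_sup_right h
  have hm := D.Ubil_mem x (L' hx) y (R' hy)
  obtain ⟨a, ha, b, hb, e⟩ := Submodule.mem_sup.1 hm
  have h1 := D.Ubil_def x (L' hx) y (R' hy) a (L' ha)
  rw [aux_pm_K D (D.hK_sub a ha x hx), aux_pm_G D (aux_K_lie D ha hy),
    D.gform_KG1 _ (D.hK_sub a ha x hx) _ hy, D.gform_KG1 _ hx _ (aux_K_lie D ha hy),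
    ← e, map_add, LinearMap.add_apply, D.gform_G1K a ha b hb] at h1
  have : a = 0 := aux_zero D (L' ha) (by linarith)
  rw [← e, this, zero_add]; exact hb

lemma aux_mem (D : ExtSymData L) {x y : L} (hx : x ∈ D.K) (hy : y ∈ D.G1) :
    iota1 x + iotaI y ∈ mDual D :=
  Submodule.add_mem_sup (Submodule.mem_map_of_mem hx) (Submodule.mem_map_of_mem hy)

lemma aux_proj (D : ExtSymData L) (proj' : (ℂ ⊗[ℝ] L) →ₗ[ℝ] ℂ ⊗[ℝ] L)
    (hproj'_H : ∀ h ∈ D.H, proj' (iota1 h) = 0)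
    (hproj'_K : ∀ x ∈ D.K, proj' (iota1 x) = iota1 x)
    (hproj'_G1 : ∀ y ∈ D.G1, proj' (iotaI y) = iotaI y)
    {x y x' y' : L} (hx : x ∈ D.K) (hy : y ∈ D.G1) (hx' : x' ∈ D.K) (hy' : y' ∈ D.G1) :
    proj' ⁅(iota1 x + iotaI y : ℂ ⊗[ℝ] L), iota1 x' + iotaI y'⁆
      = iota1 (⁅x, x'⁆ - D.projm ⁅y, y'⁆) + iotaI (⁅x, y'⁆ + ⁅y, x'⁆) := by
  obtain ⟨h, hh, k, hk, e, e'⟩ := aux_decomp D hy hy'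
  rw [aux_lie, e', e, map_add proj',
    hproj'_G1 _ (D.G1.add_mem (aux_K_lie D hx hy') (aux_lie_K D hx' hy))]
  simp only [map_add, map_sub, hproj'_H h hh, hproj'_K k hk, hproj'_K _ (D.hK_sub x hx x' hx'),
    zero_add]

/-- `Λ'` coincides with the Nomizu map of the dual data: for
all `A, B ∈ 𝔪'`, `Λ'(A)B = ½ proj_{𝔪'}([A,B]) + U'(A,B)`, where `U'` is the
symmetric map `𝔪' × 𝔪' → 𝔪'` determined by
`2g'(U'(A,B),C) = g'(proj_{𝔪'}([C,A]),B) + g'(A, proj_{𝔪'}([C,B]))` for all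
`C ∈ 𝔪'`. -/
theorem statement_11 [FiniteDimensional ℝ L] [LieAlgebra.IsSemisimple ℝ L]
    (D : ExtSymData L)
    (g' : (ℂ ⊗[ℝ] L) → (ℂ ⊗[ℝ] L) → ℝ)
    (hg' : ∀ x ∈ D.K, ∀ y ∈ D.G1, ∀ x' ∈ D.K, ∀ y' ∈ D.G1,
      g' (iota1 x + iotaI y) (iota1 x' + iotaI y')
        = D.gform x x' + D.gform y y')
    (proj' : (ℂ ⊗[ℝ] L) →ₗ[ℝ] ℂ ⊗[ℝ] L)
    (hproj'_H : ∀ h ∈ D.H, proj' (iota1 h) = 0)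
    (hproj'_K : ∀ x ∈ D.K, proj' (iota1 x) = iota1 x)
    (hproj'_G1 : ∀ y ∈ D.G1, proj' (iotaI y) = iotaI y)
    (U' : (ℂ ⊗[ℝ] L) → (ℂ ⊗[ℝ] L) → ℂ ⊗[ℝ] L)
    (hU'_mem : ∀ A ∈ mDual D, ∀ B ∈ mDual D, U' A B ∈ mDual D)
    (hU'_symm : ∀ A ∈ mDual D, ∀ B ∈ mDual D, U' A B = U' B A)
    (hU'_def : ∀ A ∈ mDual D, ∀ B ∈ mDual D, ∀ C ∈ mDual D,
      2 * g' (U' A B) C = g' (proj' ⁅C, A⁆) B + g' A (proj' ⁅C, B⁆))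
    (x : L) (hx : x ∈ D.K) (y : L) (hy : y ∈ D.G1)
    (x' : L) (hx' : x' ∈ D.K) (y' : L) (hy' : y' ∈ D.G1) :
    nomizuDual D x y x' y'
      = (2⁻¹ : ℝ) • proj' ⁅iota1 x + iotaI y, iota1 x' + iotaI y'⁆
        + U' (iota1 x + iotaI y) (iota1 x' + iotaI y') := by
  have R' : ∀ {v}, v ∈ D.G1 → v ∈ D.K ⊔ D.G1 := fun h => Submodule.mem_sup_right h
  have L' : ∀ {v}, v ∈ D.K → v ∈ D.K ⊔ D.G1 := fun h => Submodule.mem_sup_left h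
  have hA := aux_mem D hx hy
  have hB := aux_mem D hx' hy'
  obtain ⟨_, ⟨a, ha, rfl⟩, _, ⟨b, hb, rfl⟩, e⟩ := Submodule.mem_sup.1 (hU'_mem _ hA _ hB)
  have ha : a ∈ D.K := ha
  have hb : b ∈ D.G1 := hb
  have key : ∀ c ∈ D.K, ∀ d ∈ D.G1, 2 * (D.gform a c + D.gform b d)
      = D.gform (⁅c, x⁆ - D.projm ⁅d, y⁆) x' + D.gform (⁅c, y⁆ + ⁅d, x⁆) y'
        + (D.gform x (⁅c, x'⁆ - D.projm ⁅d, y'⁆) + D.gform y (⁅c, y'⁆ + ⁅d, x'⁆)) := by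
    intro c hc d hd
    have h := hU'_def _ hA _ hB _ (aux_mem D hc hd)
    rw [← e, aux_proj D proj' hproj'_H hproj'_K hproj'_G1 hc hd hx hy,
      aux_proj D proj' hproj'_H hproj'_K hproj'_G1 hc hd hx' hy',
      hg' a ha b hb c hc d hd,
      hg' _ (D.K.sub_mem (D.hK_sub c hc x hx) (aux_pK D hd hy)) _
        (D.G1.add_mem (aux_K_lie D hc hy) (aux_lie_K D hx hd)) x' hx' y' hy',
      hg' x hx y hy _ (D.K.sub_mem (D.hK_sub c hc x' hx') (aux_pK D hd hy')) _
        (D.G1.add_mem (aux_K_lie D hc hy') (aux_lie_K D hx' hd))] at h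
    exact h
  have ha0 : a = 0 := by
    apply aux_zero D (L' ha)
    have h := key a ha 0 D.G1.zero_mem
    simp only [zero_lie, map_zero, sub_zero, add_zero] at h
    have h1 := aux_invK D ha hx hx'
    have h2 := aux_invG D ha hy hy'
    linarith
  have hU1 := aux_UKG D hx hy'
  have hU2 := aux_UKG D hx' hy
  have hl1 := aux_K_lie D hx hy'
  have hl2 := aux_K_lie D hx' hy
  have hb0 : b - (⁅x, y'⁆ + ⁅x', y⁆ - D.Ubil x y' - D.Ubil x' y) = 0 := by
    have hm : b - (⁅x, y'⁆ + ⁅x', y⁆ - D.Ubil x y' - D.Ubil x' y) ∈ D.G1 :=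
      D.G1.sub_mem hb (D.G1.sub_mem (D.G1.sub_mem (D.G1.add_mem hl1 hl2) hU1) hU2)
    have hall : ∀ d ∈ D.G1,
        D.gform (b - (⁅x, y'⁆ + ⁅x', y⁆ - D.Ubil x y' - D.Ubil x' y)) d = 0 := by
      intro d hd
      have h := key 0 D.K.zero_mem d hd
      have h1 := D.Ubil_def x (L' hx) y' (R' hy') d (R' hd)
      have h2 := D.Ubil_def x' (L' hx') y (R' hy) d (R' hd)
      rw [aux_pm_G D (aux_lie_K D hx hd), ← lie_skew] at h1
      rw [aux_pm_G D (aux_lie_K D hx' hd), ← lie_skew] at h2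
      rw [← lie_skew d x, ← lie_skew d x'] at h
      have h3 := aux_invG D hx hd hy'
      have h4 := aux_invG D hx' hd hy
      have h5 := aux_symG D hd hl1
      have h6 := aux_symG D hd hl2
      have h7 := aux_symG D hy (aux_K_lie D hx' hd)
      have h8 := aux_symK D hx' (aux_pK D hd hy)
      simp only [zero_lie, map_zero, zero_sub, zero_add, map_neg, map_sub, map_add,
        LinearMap.neg_apply, LinearMap.sub_apply, LinearMap.add_apply] at h h1 h2 ⊢
      linarith
    exact aux_zero D (R' hm) (hall _ hm)
  rw [sub_eq_zero] at hb0
  rw [← e, ha0, hb0, aux_proj D proj' hproj'_H hproj'_K hproj'_G1 hx hy hx' hy']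
  unfold nomizuDual nomizu
  rw [aux_UKK D hx hx', aux_UGG D hy hy', D.Ubil_symm y x', aux_pm_K D (D.hK_sub x hx x' hx'),
    aux_pm_G D hl1, aux_pm_G D (aux_lie_K D hx' hy), ← lie_skew y x']
  simp only [map_add, map_sub, map_smul, map_neg, map_zero]
  module
end
end

section
/- Let ω := e^{123} − e^{145} − e^{167} − e^{246} + e^{257} − e^{347} − e^{356} (this is the G₂-form η_1∧η_2∧η_3 + Σ_{i=1}^3 η_i∧Φ_i^H, where Φ_i^H denotes the part of Φ_i not involving e^1, e^2, e^3). Then ω·ψ_0 = −7 ψ_0. -/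
noncomputable section

/- Context: the spin representation in dimension 7, realized on
`Σ = Λ^•(ℂ³)`, modelled as `Finset (Fin 3) → ℂ` (coefficients with respect to
the orthonormal basis of monomials `y_{i₁} ∧ ⋯ ∧ y_{i_k}`, `i₁ < ⋯ < i_k`).
`cOp j` is wedging with `y_j`, `aOp j` is its adjoint, and `γ` is the Clifford
multiplication of `ℝ⁷` determined by
`γ(e₁) = i` on even-degree and `-i` on odd-degree elements,
`γ(e_{2j}) = i(a_j + c_j)`, `γ(e_{2j+1}) = c_j - a_j`.
Indices of `e₁,…,e₇` (resp. `y₁,y₂,y₃`) are shifted to `Fin 7` (resp. `Fin 3`),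
so `e_s` is `estd (s-1)` and `y_j` corresponds to `j-1 : Fin 3`. -/

open Complex

/-- The spinor module `Σ = Λ^•(ℂ³)`, as coefficient functions on the monomial
basis indexed by subsets of `{1,2,3}`. -/
abbrev SpinorRep := Finset (Fin 3) → ℂ

/-- The sign `(-1)^{#{i ∈ S | i < j}}` arising when wedging `y_j` into the
monomial indexed by `S`. -/
def csign (j : Fin 3) (S : Finset (Fin 3)) : ℂ := (-1 : ℂ) ^ (S.filter (· < j)).card

/-- Creation operator `c_j`: wedge product with `y_j`. -/
def cOp (j : Fin 3) : SpinorRep →ₗ[ℂ] SpinorRep where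
  toFun ψ := fun S => if j ∈ S then csign j S * ψ (S.erase j) else 0
  map_add' ψ χ := by
    funext S
    by_cases h : j ∈ S <;> simp [h, mul_add]
  map_smul' c ψ := by
    funext S
    by_cases h : j ∈ S <;> simp [h] <;> ring

/-- Annihilation operator `a_j = c_j^*`: the adjoint of `c_j` with respect to
the Hermitian inner product making the monomials orthonormal. -/
def aOp (j : Fin 3) : SpinorRep →ₗ[ℂ] SpinorRep where
  toFun ψ := fun S => if j ∈ S then 0 else csign j S * ψ (insert j S)
  map_add' ψ χ := by
    funext S
    by_cases h : j ∈ S <;> simp [h, mul_add]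
  map_smul' c ψ := by
    funext S
    by_cases h : j ∈ S <;> simp [h] <;> ring

/-- `γ(e₁)`: multiplication by `i` on even-degree and by `-i` on odd-degree
elements. -/
def parityOp : SpinorRep →ₗ[ℂ] SpinorRep where
  toFun ψ := fun S => (if Even S.card then I else -I) * ψ S
  map_add' ψ χ := by funext S; simp [mul_add]
  map_smul' c ψ := by funext S; simp; ring

/-- Clifford multiplication by the standard basis vectors `e₁,…,e₇` of `ℝ⁷`. -/
def gammaBasis : Fin 7 → (SpinorRep →ₗ[ℂ] SpinorRep)
  | 0 => parityOp
  | 1 => I • (aOp 0 + cOp 0)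
  | 2 => cOp 0 - aOp 0
  | 3 => I • (aOp 1 + cOp 1)
  | 4 => cOp 1 - aOp 1
  | 5 => I • (aOp 2 + cOp 2)
  | 6 => cOp 2 - aOp 2

/-- Clifford multiplication `γ(v)` for `v ∈ ℝ⁷`. -/
def gamma (v : Fin 7 → ℝ) : SpinorRep →ₗ[ℂ] SpinorRep :=
  ∑ s : Fin 7, (v s : ℂ) • gammaBasis s

/-- The index in `Fin 7` of the Reeb direction `ξ_i = e_i`, `i = 1,2,3`. -/
def xiIdx (i : Fin 3) : Fin 7 := ⟨i.val, by omega⟩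

/-- The action of the fundamental 2-forms
`Φ₁ = -e^{23} - e^{45} - e^{67}`, `Φ₂ = e^{13} - e^{46} + e^{57}`,
`Φ₃ = -e^{12} - e^{47} - e^{56}` on spinors, via
`τ·ψ = Σ_{p<q} τ_{pq} γ(e_p)γ(e_q)ψ`. -/
def PhiOp : Fin 3 → (SpinorRep →ₗ[ℂ] SpinorRep)
  | 0 => -(gammaBasis 1 ∘ₗ gammaBasis 2) - gammaBasis 3 ∘ₗ gammaBasis 4
         - gammaBasis 5 ∘ₗ gammaBasis 6
  | 1 => gammaBasis 0 ∘ₗ gammaBasis 2 - gammaBasis 3 ∘ₗ gammaBasis 5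
         + gammaBasis 4 ∘ₗ gammaBasis 6
  | 2 => -(gammaBasis 0 ∘ₗ gammaBasis 1) - gammaBasis 3 ∘ₗ gammaBasis 6
         - gammaBasis 4 ∘ₗ gammaBasis 5

/-- The canonical spinor `ψ₀ = (y₂ ∧ y₃ + i y₁)/√2`. -/
def psi0 : SpinorRep := fun S =>
  if S = ({1, 2} : Finset (Fin 3)) then (Real.sqrt 2 : ℂ)⁻¹
  else if S = ({0} : Finset (Fin 3)) then I * (Real.sqrt 2 : ℂ)⁻¹
  else 0

/-- The auxiliary spinors `ψ_i = ξ_i · ψ₀`, `i = 1,2,3`. -/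
def psiAux (i : Fin 3) : SpinorRep := gammaBasis (xiIdx i) psi0

/-- A spinor given by its eight coefficients. -/
def mkS (a0 a1 a2 a3 a4 a5 a6 a7 : ℂ) : SpinorRep := fun S =>
  if 0 ∈ S then
    (if 1 ∈ S then (if 2 ∈ S then a7 else a3) else (if 2 ∈ S then a5 else a1))
  else
    (if 1 ∈ S then (if 2 ∈ S then a6 else a2) else (if 2 ∈ S then a4 else a0))

theorem cases8 (S : Finset (Fin 3)) : S = ∅ ∨ S = {0} ∨ S = {1} ∨ S = {0, 1} ∨ S = {2} ∨
    S = {0, 2} ∨ S = {1, 2} ∨ S = {0, 1, 2} := by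
  revert S; decide

theorem csign_zero (S : Finset (Fin 3)) : csign 0 S = 1 := by
  simp [csign]

theorem csign_one (S : Finset (Fin 3)) : csign 1 S = if 0 ∈ S then -1 else 1 := by
  have h : (S.filter (· < 1)).card = if 0 ∈ S then 1 else 0 := by revert S; decide
  rw [csign, h]; split_ifs <;> simp

theorem csign_two (S : Finset (Fin 3)) : csign 2 S =
    (if 0 ∈ S then -1 else 1) * (if 1 ∈ S then -1 else 1) := by
  have h : (S.filter (· < 2)).card = (if 0 ∈ S then 1 else 0) + (if 1 ∈ S then 1 else 0) := by
    revert S; decide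
  rw [csign, h]; split_ifs <;> simp

theorem parity_eq (S : Finset (Fin 3)) : (if Even S.card then I else -I) =
    I * ((if 0 ∈ S then -1 else 1) * (if 1 ∈ S then -1 else 1) * (if 2 ∈ S then -1 else 1)) := by
  rcases cases8 S with rfl | rfl | rfl | rfl | rfl | rfl | rfl | rfl <;>
  simp [Finset.card_insert_of_notMem, Nat.even_iff]

theorem psi0_mk : psi0 = mkS 0 (I * (Real.sqrt 2 : ℂ)⁻¹) 0 0 0 0 (Real.sqrt 2 : ℂ)⁻¹ 0 := by
  have h1 : ∀ S : Finset (Fin 3), S = {1, 2} ↔ (0 ∉ S ∧ 1 ∈ S ∧ 2 ∈ S) := by decide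
  have h2 : ∀ S : Finset (Fin 3), S = {0} ↔ (0 ∈ S ∧ 1 ∉ S ∧ 2 ∉ S) := by decide
  funext S
  simp only [psi0, mkS, h1, h2]
  by_cases p : 0 ∈ S <;> by_cases q : 1 ∈ S <;> by_cases r : 2 ∈ S <;> simp [p, q, r]

theorem mkS_add (a b c d e f g h a2 b2 c2 d2 e2 f2 g2 h2 : ℂ) :
    mkS a b c d e f g h + mkS a2 b2 c2 d2 e2 f2 g2 h2 =
      mkS (a+a2) (b+b2) (c+c2) (d+d2) (e+e2) (f+f2) (g+g2) (h+h2) := by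
  funext S; simp only [mkS, Pi.add_apply]; split_ifs <;> rfl

theorem mkS_sub (a b c d e f g h a2 b2 c2 d2 e2 f2 g2 h2 : ℂ) :
    mkS a b c d e f g h - mkS a2 b2 c2 d2 e2 f2 g2 h2 =
      mkS (a-a2) (b-b2) (c-c2) (d-d2) (e-e2) (f-f2) (g-g2) (h-h2) := by
  funext S; simp only [mkS, Pi.sub_apply]; split_ifs <;> rfl

theorem mkS_smul (z a b c d e f g h : ℂ) :
    z • mkS a b c d e f g h = mkS (z*a) (z*b) (z*c) (z*d) (z*e) (z*f) (z*g) (z*h) := by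
  funext S; simp only [mkS, Pi.smul_apply, smul_eq_mul]; split_ifs <;> rfl

theorem parity_mk (a b c d e f g h : ℂ) : parityOp (mkS a b c d e f g h) =
    mkS (I * a) (-(I * b)) (-(I * c)) (I * d) (-(I * e)) (I * f) (I * g) (-(I * h)) := by
  funext S
  by_cases p : 0 ∈ S <;> by_cases q : 1 ∈ S <;> by_cases r : 2 ∈ S <;>
  simp [parityOp, mkS, csign_zero, csign_one, csign_two, parity_eq, p, q, r]

theorem c0_mk (a b c d e f g h : ℂ) : cOp 0 (mkS a b c d e f g h) =
    mkS 0 a 0 c 0 e 0 g := by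
  funext S
  by_cases p : 0 ∈ S <;> by_cases q : 1 ∈ S <;> by_cases r : 2 ∈ S <;>
  simp [cOp, mkS, csign_zero, csign_one, csign_two, parity_eq, p, q, r]

theorem a0_mk (a b c d e f g h : ℂ) : aOp 0 (mkS a b c d e f g h) =
    mkS b 0 d 0 f 0 h 0 := by
  funext S
  by_cases p : 0 ∈ S <;> by_cases q : 1 ∈ S <;> by_cases r : 2 ∈ S <;>
  simp [aOp, mkS, csign_zero, csign_one, csign_two, parity_eq, p, q, r]

theorem c1_mk (a b c d e f g h : ℂ) : cOp 1 (mkS a b c d e f g h) =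
    mkS 0 0 a (-b) 0 0 e (-f) := by
  funext S
  by_cases p : 0 ∈ S <;> by_cases q : 1 ∈ S <;> by_cases r : 2 ∈ S <;>
  simp [cOp, mkS, csign_zero, csign_one, csign_two, parity_eq, p, q, r]

theorem a1_mk (a b c d e f g h : ℂ) : aOp 1 (mkS a b c d e f g h) =
    mkS c (-d) 0 0 g (-h) 0 0 := by
  funext S
  by_cases p : 0 ∈ S <;> by_cases q : 1 ∈ S <;> by_cases r : 2 ∈ S <;>
  simp [aOp, mkS, csign_zero, csign_one, csign_two, parity_eq, p, q, r]

theorem c2_mk (a b c d e f g h : ℂ) : cOp 2 (mkS a b c d e f g h) =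
    mkS 0 0 0 0 a (-b) (-c) d := by
  funext S
  by_cases p : 0 ∈ S <;> by_cases q : 1 ∈ S <;> by_cases r : 2 ∈ S <;>
  simp [cOp, mkS, csign_zero, csign_one, csign_two, parity_eq, p, q, r]

theorem a2_mk (a b c d e f g h : ℂ) : aOp 2 (mkS a b c d e f g h) =
    mkS e (-f) (-g) h 0 0 0 0 := by
  funext S
  by_cases p : 0 ∈ S <;> by_cases q : 1 ∈ S <;> by_cases r : 2 ∈ S <;>
  simp [aOp, mkS, csign_zero, csign_one, csign_two, parity_eq, p, q, r]

/-- With `ω = e^{123} - e^{145} - e^{167} - e^{246} + e^{257}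
- e^{347} - e^{356}` (the `G₂`-form `η₁∧η₂∧η₃ + Σᵢ ηᵢ∧Φᵢ^H`), acting on spinors
by `σ·ψ = Σ_{p<q<r} σ_{pqr} γ(e_p)γ(e_q)γ(e_r)ψ`: `ω·ψ₀ = -7ψ₀`. -/
theorem statement_12 :
    gammaBasis 0 (gammaBasis 1 (gammaBasis 2 psi0))
      - gammaBasis 0 (gammaBasis 3 (gammaBasis 4 psi0))
      - gammaBasis 0 (gammaBasis 5 (gammaBasis 6 psi0))
      - gammaBasis 1 (gammaBasis 3 (gammaBasis 5 psi0))
      + gammaBasis 1 (gammaBasis 4 (gammaBasis 6 psi0))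
      - gammaBasis 2 (gammaBasis 3 (gammaBasis 6 psi0))
      - gammaBasis 2 (gammaBasis 4 (gammaBasis 5 psi0))
    = (-7 : ℂ) • psi0 := by
  simp only [gammaBasis, LinearMap.smul_apply, LinearMap.add_apply, LinearMap.sub_apply, psi0_mk,
    parity_mk, c0_mk, c1_mk, c2_mk, a0_mk, a1_mk, a2_mk, mkS_add, mkS_sub, mkS_smul]
  have hI : I * I = -1 := I_mul_I
  congr 1 <;> ring_nf <;> simp only [I_sq, I_pow_three, I_pow_four] <;> ring_nf
end
end

section
/- For all i, j ∈ {1,2,3} with i ≠ j: Φ_i·ψ_0 = ψ_i; Φ_i·ψ_i = γ(ξ_i)ψ_i; and Φ_i·ψ_j = −3 γ(ξ_i)ψ_j. -/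
noncomputable section

/- Context: the spin representation in dimension 7, realized on
`Σ = Λ^•(ℂ³)`, modelled as `Finset (Fin 3) → ℂ` (coefficients with respect to
the orthonormal basis of monomials `y_{i₁} ∧ ⋯ ∧ y_{i_k}`, `i₁ < ⋯ < i_k`).
`cOp j` is wedging with `y_j`, `aOp j` is its adjoint, and `γ` is the Clifford
multiplication of `ℝ⁷` determined by
`γ(e₁) = i` on even-degree and `-i` on odd-degree elements,
`γ(e_{2j}) = i(a_j + c_j)`, `γ(e_{2j+1}) = c_j - a_j`.
Indices of `e₁,…,e₇` (resp. `y₁,y₂,y₃`) are shifted to `Fin 7` (resp. `Fin 3`),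
so `e_s` is `estd (s-1)` and `y_j` corresponds to `j-1 : Fin 3`. -/

open Complex

theorem spinor_ext {ψ χ : SpinorRep}
    (h0 : ψ ∅ = χ ∅) (h1 : ψ {0} = χ {0}) (h2 : ψ {1} = χ {1}) (h3 : ψ {2} = χ {2})
    (h4 : ψ {0, 1} = χ {0, 1}) (h5 : ψ {0, 2} = χ {0, 2}) (h6 : ψ {1, 2} = χ {1, 2})
    (h7 : ψ {0, 1, 2} = χ {0, 1, 2}) : ψ = χ := by
  funext S
  have : S = ∅ ∨ S = {0} ∨ S = {1} ∨ S = {2} ∨ S = {0, 1} ∨ S = {0, 2} ∨ S = {1, 2} ∨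
      S = {0, 1, 2} := by
    revert S; decide
  rcases this with h | h | h | h | h | h | h | h <;> subst h <;> assumption

theorem cOp_0 (ψ : SpinorRep) :
    cOp 0 ψ ∅ = 0 ∧
    cOp 0 ψ {0} = ψ ∅ ∧
    cOp 0 ψ {1} = 0 ∧
    cOp 0 ψ {2} = 0 ∧
    cOp 0 ψ {0, 1} = ψ {1} ∧
    cOp 0 ψ {0, 2} = ψ {2} ∧
    cOp 0 ψ {1, 2} = 0 ∧
    cOp 0 ψ {0, 1, 2} = ψ {1, 2} := by
  refine ⟨?_, ?_, ?_, ?_, ?_, ?_, ?_, ?_⟩ <;> simp +decide [cOp, aOp, csign, Finset.filter_insert, Finset.filter_singleton] <;>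
    first | rfl | exact congrArg ψ (by decide)

theorem cOp_1 (ψ : SpinorRep) :
    cOp 1 ψ ∅ = 0 ∧
    cOp 1 ψ {0} = 0 ∧
    cOp 1 ψ {1} = ψ ∅ ∧
    cOp 1 ψ {2} = 0 ∧
    cOp 1 ψ {0, 1} = -ψ {0} ∧
    cOp 1 ψ {0, 2} = 0 ∧
    cOp 1 ψ {1, 2} = ψ {2} ∧
    cOp 1 ψ {0, 1, 2} = -ψ {0, 2} := by
  refine ⟨?_, ?_, ?_, ?_, ?_, ?_, ?_, ?_⟩ <;> simp +decide [cOp, aOp, csign, Finset.filter_insert, Finset.filter_singleton] <;>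
    first | rfl | exact congrArg ψ (by decide)

theorem cOp_2 (ψ : SpinorRep) :
    cOp 2 ψ ∅ = 0 ∧
    cOp 2 ψ {0} = 0 ∧
    cOp 2 ψ {1} = 0 ∧
    cOp 2 ψ {2} = ψ ∅ ∧
    cOp 2 ψ {0, 1} = 0 ∧
    cOp 2 ψ {0, 2} = -ψ {0} ∧
    cOp 2 ψ {1, 2} = -ψ {1} ∧
    cOp 2 ψ {0, 1, 2} = ψ {0, 1} := by
  refine ⟨?_, ?_, ?_, ?_, ?_, ?_, ?_, ?_⟩ <;> simp +decide [cOp, aOp, csign, Finset.filter_insert, Finset.filter_singleton] <;>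
    first | rfl | exact congrArg ψ (by decide)

theorem aOp_0 (ψ : SpinorRep) :
    aOp 0 ψ ∅ = ψ {0} ∧
    aOp 0 ψ {0} = 0 ∧
    aOp 0 ψ {1} = ψ {0, 1} ∧
    aOp 0 ψ {2} = ψ {0, 2} ∧
    aOp 0 ψ {0, 1} = 0 ∧
    aOp 0 ψ {0, 2} = 0 ∧
    aOp 0 ψ {1, 2} = ψ {0, 1, 2} ∧
    aOp 0 ψ {0, 1, 2} = 0 := by
  refine ⟨?_, ?_, ?_, ?_, ?_, ?_, ?_, ?_⟩ <;> simp +decide [cOp, aOp, csign, Finset.filter_insert, Finset.filter_singleton] <;>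
    first | rfl | exact congrArg ψ (by decide)

theorem aOp_1 (ψ : SpinorRep) :
    aOp 1 ψ ∅ = ψ {1} ∧
    aOp 1 ψ {0} = -ψ {0, 1} ∧
    aOp 1 ψ {1} = 0 ∧
    aOp 1 ψ {2} = ψ {1, 2} ∧
    aOp 1 ψ {0, 1} = 0 ∧
    aOp 1 ψ {0, 2} = -ψ {0, 1, 2} ∧
    aOp 1 ψ {1, 2} = 0 ∧
    aOp 1 ψ {0, 1, 2} = 0 := by
  refine ⟨?_, ?_, ?_, ?_, ?_, ?_, ?_, ?_⟩ <;> simp +decide [cOp, aOp, csign, Finset.filter_insert, Finset.filter_singleton] <;>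
    first | rfl | exact congrArg ψ (by decide)

theorem aOp_2 (ψ : SpinorRep) :
    aOp 2 ψ ∅ = ψ {2} ∧
    aOp 2 ψ {0} = -ψ {0, 2} ∧
    aOp 2 ψ {1} = -ψ {1, 2} ∧
    aOp 2 ψ {2} = 0 ∧
    aOp 2 ψ {0, 1} = ψ {0, 1, 2} ∧
    aOp 2 ψ {0, 2} = 0 ∧
    aOp 2 ψ {1, 2} = 0 ∧
    aOp 2 ψ {0, 1, 2} = 0 := by
  refine ⟨?_, ?_, ?_, ?_, ?_, ?_, ?_, ?_⟩ <;> simp +decide [cOp, aOp, csign, Finset.filter_insert, Finset.filter_singleton] <;>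
    first | rfl | exact congrArg ψ (by decide)

theorem parityOp_all (ψ : SpinorRep) :
    parityOp ψ ∅ = I * ψ ∅ ∧ parityOp ψ {0} = -I * ψ {0} ∧ parityOp ψ {1} = -I * ψ {1} ∧
    parityOp ψ {2} = -I * ψ {2} ∧ parityOp ψ {0, 1} = I * ψ {0, 1} ∧
    parityOp ψ {0, 2} = I * ψ {0, 2} ∧ parityOp ψ {1, 2} = I * ψ {1, 2} ∧
    parityOp ψ {0, 1, 2} = -I * ψ {0, 1, 2} := by
  refine ⟨?_, ?_, ?_, ?_, ?_, ?_, ?_, ?_⟩ <;> simp +decide [parityOp]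

theorem psi0_all :
    psi0 ∅ = 0 ∧ psi0 {0} = I * (Real.sqrt 2 : ℂ)⁻¹ ∧ psi0 {1} = 0 ∧ psi0 {2} = 0 ∧
    psi0 {0, 1} = 0 ∧ psi0 {0, 2} = 0 ∧ psi0 {1, 2} = (Real.sqrt 2 : ℂ)⁻¹ ∧
    psi0 {0, 1, 2} = 0 := by
  refine ⟨?_, ?_, ?_, ?_, ?_, ?_, ?_, ?_⟩ <;> simp +decide [psi0]

set_option maxHeartbeats 4000000

/-- For all `i ≠ j` in `{1,2,3}`:
`Φ_i·ψ₀ = ψ_i`, `Φ_i·ψ_i = ξ_i·ψ_i`, and `Φ_i·ψ_j = -3 ξ_i·ψ_j`. -/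
theorem statement_13 (i j : Fin 3) (hij : i ≠ j) :
    PhiOp i psi0 = psiAux i ∧
    PhiOp i (psiAux i) = gammaBasis (xiIdx i) (psiAux i) ∧
    PhiOp i (psiAux j) = (-3 : ℂ) • gammaBasis (xiIdx i) (psiAux j) := by
  have hI : I * I = -1 := I_mul_I
  have hx0 : xiIdx 0 = 0 := rfl
  have hx1 : xiIdx 1 = 1 := rfl
  have hx2 : xiIdx 2 = 2 := rfl
  generalize hr : (Real.sqrt 2 : ℂ)⁻¹ = r
  have hp := psi0_all
  rw [hr] at hp
  revert hij
  fin_cases i <;> fin_cases j <;> intro hij <;> first | exact absurd rfl hij | skip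
  all_goals
    refine ⟨?_, ?_, ?_⟩ <;> apply spinor_ext <;>
    simp [PhiOp, psiAux, hx0, hx1, hx2, gammaBasis, cOp_0, cOp_1, cOp_2, aOp_0, aOp_1, aOp_2,
      parityOp_all, hp] <;> first | done | grind
end
end

section
/- For every even permutation (i,j,k) of (1,2,3): Φ_i·ψ_0 = γ(ξ_j)(γ(ξ_k)ψ_0); equivalently, (Φ_i − ξ_j·ξ_k)·ψ_0 = 0. -/
noncomputable section

/- Context: the spin representation in dimension 7, realized on
`Σ = Λ^•(ℂ³)`, modelled as `Finset (Fin 3) → ℂ` (coefficients with respect to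
the orthonormal basis of monomials `y_{i₁} ∧ ⋯ ∧ y_{i_k}`, `i₁ < ⋯ < i_k`).
`cOp j` is wedging with `y_j`, `aOp j` is its adjoint, and `γ` is the Clifford
multiplication of `ℝ⁷` determined by
`γ(e₁) = i` on even-degree and `-i` on odd-degree elements,
`γ(e_{2j}) = i(a_j + c_j)`, `γ(e_{2j+1}) = c_j - a_j`.
Indices of `e₁,…,e₇` (resp. `y₁,y₂,y₃`) are shifted to `Fin 7` (resp. `Fin 3`),
so `e_s` is `estd (s-1)` and `y_j` corresponds to `j-1 : Fin 3`. -/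

open Complex

/-- The eight subsets of the index set. -/
theorem subsets_cases (S : Finset (Fin 3)) :
    S = ∅ ∨ S = {0} ∨ S = {1} ∨ S = {2} ∨ S = {0, 1} ∨ S = {0, 2} ∨ S = {1, 2} ∨
      S = {0, 1, 2} := by
  revert S; decide

/-- For every even permutation `(i,j,k)` of `(1,2,3)`
(encoded cyclically as `(i, i+1, i+2)` with `i : Fin 3`):
`Φ_i·ψ₀ = ξ_j·(ξ_k·ψ₀)`; equivalently `(Φ_i - ξ_j·ξ_k)·ψ₀ = 0`. -/
theorem statement_14 (i : Fin 3) :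
    PhiOp i psi0 = gammaBasis (xiIdx (i + 1)) (gammaBasis (xiIdx (i + 2)) psi0) := by
  have cA : ∀ j ψ S, cOp j ψ S = if j ∈ S then csign j S * ψ (S.erase j) else 0 :=
    fun _ _ _ => rfl
  have aA : ∀ j ψ S, aOp j ψ S = if j ∈ S then 0 else csign j S * ψ (insert j S) :=
    fun _ _ _ => rfl
  have pA : ∀ ψ S, parityOp ψ S = (if Even S.card then I else -I) * ψ S := fun _ _ => rfl
  have x0 : xiIdx 0 = 0 := rfl
  have x1 : xiIdx 1 = 1 := rfl
  have x2 : xiIdx 2 = 2 := rfl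
  have i3 : (1 : Fin 3) + 2 = 0 := rfl
  have i4 : (2 : Fin 3) + 1 = 0 := rfl
  have i5 : (2 : Fin 3) + 2 = 1 := rfl
  have i6 : (1 : Fin 3) + 1 = 2 := rfl
  have hi : i = 0 ∨ i = 1 ∨ i = 2 := by revert i; decide
  funext S
  rcases hi with rfl | rfl | rfl <;>
  rcases subsets_cases S with rfl | rfl | rfl | rfl | rfl | rfl | rfl | rfl <;>
  simp +decide [PhiOp, gammaBasis, cA, aA, pA, x0, x1, x2, i3, i4, i5, i6, csign, psi0,
    Finset.filter_insert, Finset.filter_singleton] <;>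
  ring_nf <;> simp [I_sq] <;> ring
end
end
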